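/- (Theorem: convergence rate of the sieve maximum likelihood estimator) Let α > 0, B > 0, m ≥ α, p ∈ ℕ₊, 1 < h̲ < h̄ < ∞, σ₀ > 0. Assume the data D_n = (x_i, y_i)_{i=1}^n are i.i.d. with density p₀(x,y) = φ_{σ₀}(y − f₀(x)) p_x(x), where f₀ ∈ 𝔠^{α,B}([0,1]^p) and p_x is a density on [0,1]^p bounded away from 0 and ∞. For K ∈ ℕ₊ define the sieve G_K = { Σ_{k ∈ [K]^p} Σ_{s : |s| ≤ m} ξ_{ks} ψ_{ks} : Kh ∈ [h̲, h̄], μ_k ∈ closure(X_K(k)), max_{k,s} |ξ_{ks}| ≤ B }. Set K_n = ⌈(n/log n)^{1/(2α+p)}⌉, and let f̂_{K_n} ∈ argmax_{f ∈ G_{K_n}} Σ_{i=1}^n log φ_{σ₀}(y_i − f(x_i)) (equivalently, a least-squares minimizer over G_{K_n}). Then there exists a constant M > 0 such that P₀^n( there exists a maximizer f̂_{K_n} with ‖f₀ − f̂_{K_n}‖_{L₂(P_x)} ≥ M (log n / n)^{α/(2α+p)} ) → 0 as n → ∞. -/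

import Mathlib

open MeasureTheory Filter Real Matrix
open scoped ENNReal NNReal BigOperators Classical

noncomputable section

namespace KMP

/-- The unit hypercube `[0,1]^p`. -/
def cube (p : ℕ) : Set (Fin p → ℝ) := {x | ∀ j, 0 ≤ x j ∧ x j ≤ 1}

/-- A boxed kernel: continuous, `[0,1]`-valued, supported on the closed unit sup-norm ball,
nonincreasing in the sup-norm (`‖·‖` on `Fin p → ℝ` is the sup-norm). -/
def IsBoxedKernel {p : ℕ} (φ : (Fin p → ℝ) → ℝ) : Prop :=
  Continuous φ ∧ (∀ u, 0 ≤ φ u ∧ φ u ≤ 1) ∧ (∀ u, 1 < ‖u‖ → φ u = 0) ∧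
    ∀ u v, ‖u‖ ≤ ‖v‖ → φ v ≤ φ u

/-- The block `X_K(k) = ∏_j ((k_j-1)/K, k_j/K]`; here `k j : Fin K` encodes `k_j - 1`. -/
def block {p : ℕ} (K : ℕ) (k : Fin p → Fin K) : Set (Fin p → ℝ) :=
  {x | ∀ j, ((k j : ℕ) : ℝ) / K < x j ∧ x j ≤ (((k j : ℕ) : ℝ) + 1) / K}

/-- The closure of the block `X_K(k)`. -/
def blockCl {p : ℕ} (K : ℕ) (k : Fin p → Fin K) : Set (Fin p → ℝ) :=
  {x | ∀ j, ((k j : ℕ) : ℝ) / K ≤ x j ∧ x j ≤ (((k j : ℕ) : ℝ) + 1) / K}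

/-- The center `μ_k^⋆` of the block `X_K(k)`. -/
def center {p : ℕ} (K : ℕ) (k : Fin p → Fin K) : Fin p → ℝ :=
  fun j => (2 * ((k j : ℕ) : ℝ) + 1) / (2 * K)

/-- Multi-indices `s ∈ {0,…,m}^p` with `|s| ≤ m`. -/
def mIdx (p m : ℕ) : Finset (Fin p → Fin (m + 1)) :=
  Finset.univ.filter fun s => (∑ j, (s j : ℕ)) ≤ m

/-- Degree `|s|` of a multi-index. -/
def deg {p m : ℕ} (s : Fin p → Fin (m + 1)) : ℕ := ∑ j, (s j : ℕ)

/-- Kernel mixture weight `w_k(x) = φ_h(x-μ_k) / ∑_l φ_h(x-μ_l)`. -/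
def weight {p : ℕ} (φ : (Fin p → ℝ) → ℝ) (K : ℕ) (h : ℝ)
    (μ : (Fin p → Fin K) → Fin p → ℝ) (k : Fin p → Fin K) (x : Fin p → ℝ) : ℝ :=
  φ (fun j => (x j - μ k j) / h) / ∑ l : Fin p → Fin K, φ (fun j => (x j - μ l j) / h)

/-- Monomial `(x - μ_k^⋆)^s`. -/
def mono {p : ℕ} (K m : ℕ) (k : Fin p → Fin K) (s : Fin p → Fin (m + 1))
    (x : Fin p → ℝ) : ℝ :=
  ∏ j, (x j - center K k j) ^ (s j : ℕ)

/-- A kernel mixture of polynomials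
`f(x) = ∑_k ∑_{|s| ≤ m} ξ_{ks} w_k(x) (x - μ_k^⋆)^s`. -/
def kmpFun {p : ℕ} (φ : (Fin p → ℝ) → ℝ) (K m : ℕ) (h : ℝ)
    (μ : (Fin p → Fin K) → Fin p → ℝ)
    (ξ : (Fin p → Fin K) → (Fin p → Fin (m + 1)) → ℝ) (x : Fin p → ℝ) : ℝ :=
  ∑ k : Fin p → Fin K, ∑ s ∈ mIdx p m, ξ k s * weight φ K h μ k x * mono K m k s x

/-- Partial derivative in the `j`-th coordinate direction. -/
def pderiv1 {p : ℕ} (j : Fin p) (f : (Fin p → ℝ) → ℝ) : (Fin p → ℝ) → ℝ :=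
  fun x => fderiv ℝ f x (Pi.single j 1)

/-- Mixed partial derivative `D^s f`. -/
def mderiv {p : ℕ} (s : Fin p → ℕ) (f : (Fin p → ℝ) → ℝ) : (Fin p → ℝ) → ℝ :=
  (List.finRange p).foldr (fun j g => (pderiv1 j)^[s j] g) f

/-- Degree of an `ℕ`-valued multi-index. -/
def degN {p : ℕ} (s : Fin p → ℕ) : ℕ := ∑ j, s j

/-- Euclidean norm on `Fin p → ℝ`. -/
def eucNorm {p : ℕ} (x : Fin p → ℝ) : ℝ := Real.sqrt (∑ j, (x j) ^ 2)

/-- `⌈α - 1⌉` (as a natural number; it is `0` when `α ≤ 1`). -/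
def hOrder (α : ℝ) : ℕ := ⌈α - 1⌉₊

/-- The α-Hölder class with envelope `B` on `[0,1]^p`: `⌈α-1⌉`-times continuously
differentiable, and the sum of the sup-norm bound on all derivatives of order `≤ ⌈α-1⌉`
and the Hölder constant of the derivatives of order `⌈α-1⌉` is at most `B`. -/
def IsHolder (p : ℕ) (α B : ℝ) (f : (Fin p → ℝ) → ℝ) : Prop :=
  ContDiff ℝ (hOrder α : ℕ∞) f ∧
    ∃ B₁ B₂ : ℝ, 0 ≤ B₁ ∧ 0 ≤ B₂ ∧ B₁ + B₂ ≤ B ∧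
      (∀ s : Fin p → ℕ, degN s ≤ hOrder α → ∀ x ∈ cube p, |mderiv s f x| ≤ B₁) ∧
      (∀ s : Fin p → ℕ, degN s = hOrder α → ∀ x ∈ cube p, ∀ y ∈ cube p, x ≠ y →
        |mderiv s f x - mderiv s f y| ≤ B₂ * eucNorm (x - y) ^ (α - (degN s : ℝ)))

/-- The `N(0, σ²)` density `φ_σ`. -/
def gaussD (σ t : ℝ) : ℝ := (σ * Real.sqrt (2 * π))⁻¹ * Real.exp (-t ^ 2 / (2 * σ ^ 2))

/-- Membership in the sieve `G_K` (centers in the closed blocks, bounded coefficients,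
bandwidth with `Kh ∈ [h̲, h̄]`). -/
def memSieve {p : ℕ} (φ : (Fin p → ℝ) → ℝ) (m : ℕ) (B hmin hmax : ℝ) (K : ℕ)
    (f : (Fin p → ℝ) → ℝ) : Prop :=
  ∃ h : ℝ, (K : ℝ) * h ∈ Set.Icc hmin hmax ∧
    ∃ μ : (Fin p → Fin K) → Fin p → ℝ, (∀ k, μ k ∈ blockCl K k) ∧
      ∃ ξ : (Fin p → Fin K) → (Fin p → Fin (m + 1)) → ℝ,
        (∀ k, ∀ s ∈ mIdx p m, |ξ k s| ≤ B) ∧ f = kmpFun φ K m h μ ξ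

/-- `K_n = ⌈(n / log n)^{1/(2α+p)}⌉`. -/
def Kn (α : ℝ) (p n : ℕ) : ℕ := ⌈((n : ℝ) / Real.log n) ^ (1 / (2 * α + (p : ℝ)))⌉₊

/-- The true data-generating distribution on `[0,1]^p × ℝ` with joint Lebesgue density
`p₀(x,y) = p_x(x) φ_{σ₀}(y - f₀(x))` (`p_x` supported on the cube). -/
def trueMeas (p : ℕ) (px f₀ : (Fin p → ℝ) → ℝ) (σ₀ : ℝ) :
    Measure ((Fin p → ℝ) × ℝ) :=
  volume.withDensity fun xy =>
    ENNReal.ofReal ((cube p).indicator px xy.1 * gaussD σ₀ (xy.2 - f₀ xy.1))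

section
lemma contDiff_pd {p : ℕ} (j : Fin p) {n : ℕ} {f : (Fin p → ℝ) → ℝ}
    (hf : ContDiff ℝ ((n + 1 : ℕ)) f) : ContDiff ℝ (n : ℕ) (pderiv1 j f) := by
  unfold pderiv1
  exact (hf.fderiv_right (m := (n : ℕ)) (by norm_cast)).clm_apply contDiff_const

lemma pd_comm {p : ℕ} (i j : Fin p) {f : (Fin p → ℝ) → ℝ}
    (hf : ContDiff ℝ (2 : ℕ) f) : pderiv1 i (pderiv1 j f) = pderiv1 j (pderiv1 i f) := by
  have h1 : ContDiff ℝ (1 : ℕ) (fderiv ℝ f) := hf.fderiv_right (by norm_cast)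
  have key : ∀ i j : Fin p, ∀ x, pderiv1 i (pderiv1 j f) x
      = fderiv ℝ (fderiv ℝ f) x (Pi.single i 1) (Pi.single j 1) := by
    intro i j x
    have hd : DifferentiableAt ℝ (fderiv ℝ f) x :=
      (h1.differentiable (by norm_num)) x
    unfold pderiv1
    rw [fderiv_clm_apply hd (differentiableAt_const _)]
    simp
  funext x
  rw [key, key]
  exact (hf.contDiffAt.isSymmSndFDerivAt (by simp)) _ _

lemma contDiff_pd_iter {p : ℕ} (j : Fin p) (k : ℕ) : ∀ {n : ℕ} {f : (Fin p → ℝ) → ℝ},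
    ContDiff ℝ ((n + k : ℕ)) f → ContDiff ℝ (n : ℕ) ((pderiv1 j)^[k] f) := by
  induction k with
  | zero => intro n f hf; simpa using hf
  | succ k ih =>
    intro n f hf
    rw [Function.iterate_succ_apply]
    exact ih (contDiff_pd j (by simpa [add_assoc] using hf))

lemma pd_iter_comm {p : ℕ} (i j : Fin p) (k : ℕ) : ∀ {f : (Fin p → ℝ) → ℝ},
    ContDiff ℝ ((k + 1 : ℕ)) f →
    (pderiv1 i)^[k] (pderiv1 j f) = pderiv1 j ((pderiv1 i)^[k] f) := by
  induction k with
  | zero => intro f hf; simp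
  | succ k ih =>
    intro f hf
    rw [Function.iterate_succ_apply, Function.iterate_succ_apply, ← ih (contDiff_pd i hf),
      pd_comm i j (hf.of_le (by norm_cast; omega))]

/-- list version of `mderiv` -/
def mdl {p : ℕ} (l : List (Fin p)) (s : Fin p → ℕ) (f : (Fin p → ℝ) → ℝ) : (Fin p → ℝ) → ℝ :=
  l.foldr (fun j g => (pderiv1 j)^[s j] g) f

lemma mdl_cons {p : ℕ} (i : Fin p) (l : List (Fin p)) (s : Fin p → ℕ) (f : (Fin p → ℝ) → ℝ) :
    mdl (i :: l) s f = (pderiv1 i)^[s i] (mdl l s f) := rfl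

lemma contDiff_mdl {p : ℕ} (l : List (Fin p)) (s : Fin p → ℕ) : ∀ {n : ℕ} {f : (Fin p → ℝ) → ℝ},
    ContDiff ℝ ((n + (l.map s).sum : ℕ)) f → ContDiff ℝ (n : ℕ) (mdl l s f) := by
  induction l with
  | nil => intro n f hf; simpa [mdl] using hf
  | cons i l ih =>
    intro n f hf
    rw [mdl_cons]
    apply contDiff_pd_iter
    apply ih
    simpa [add_assoc] using hf

lemma mdl_pd {p : ℕ} (j : Fin p) (l : List (Fin p)) (s : Fin p → ℕ) : ∀ {f : (Fin p → ℝ) → ℝ},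
    ContDiff ℝ (((l.map s).sum + 1 : ℕ)) f → mdl l s (pderiv1 j f) = pderiv1 j (mdl l s f) := by
  induction l with
  | nil => intro f hf; simp [mdl]
  | cons i l ih =>
    intro f hf
    rw [List.map_cons, List.sum_cons] at hf
    rw [mdl_cons, mdl_cons, ih (hf.of_le (by norm_cast; omega)), pd_iter_comm]
    apply contDiff_mdl
    exact hf.of_le (by norm_cast; omega)

lemma mdl_congr {p : ℕ} (l : List (Fin p)) (s t : Fin p → ℕ) (f : (Fin p → ℝ) → ℝ)
    (h : ∀ j ∈ l, s j = t j) : mdl l s f = mdl l t f := by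
  induction l with
  | nil => rfl
  | cons i l ih =>
    rw [mdl_cons, mdl_cons, ih (fun j hj => h j (by simp [hj])), h i (by simp)]

lemma mdl_add_single {p : ℕ} (j : Fin p) (l : List (Fin p)) (s : Fin p → ℕ)
    (f : (Fin p → ℝ) → ℝ) (hl : l.Nodup) (hj : j ∈ l)
    (hf : ContDiff ℝ (((l.map s).sum + 1 : ℕ)) f) :
    mdl l (s + Pi.single j 1) f = mdl l s (pderiv1 j f) := by
  induction l with
  | nil => simp at hj
  | cons i l ih =>
    rw [List.nodup_cons] at hl
    rw [List.map_cons, List.sum_cons] at hf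
    by_cases hij : i = j
    · subst hij
      rw [mdl_cons, mdl_cons, mdl_congr l (s + Pi.single i 1) s, mdl_pd]
      · simp
      · exact hf.of_le (by norm_cast; omega)
      · intro k hk
        have : k ≠ i := fun h => hl.1 (h ▸ hk)
        simp [this]
    · rw [mdl_cons, mdl_cons, ih hl.2]
      · simp [hij]
      · simpa [Ne.symm hij] using hj
      · exact hf.of_le (by norm_cast; omega)

lemma mderiv_add_single {p : ℕ} (j : Fin p) (s : Fin p → ℕ)
    (f : (Fin p → ℝ) → ℝ) (hf : ContDiff ℝ ((∑ i, s i + 1 : ℕ)) f) :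
    mderiv (s + Pi.single j 1) f = mderiv s (pderiv1 j f) := by
  apply mdl_add_single j _ s f (List.nodup_finRange p) (List.mem_finRange j)
  convert hf using 3
  rw [← List.ofFn_eq_map, List.sum_ofFn]

lemma mderiv_zero {p : ℕ} (f : (Fin p → ℝ) → ℝ) : mderiv 0 f = f := by
  unfold mderiv
  induction (List.finRange p) with
  | nil => rfl
  | cons i l ih => simp

/-- multi-indices of degree at most `r` -/
def SI (p r : ℕ) : Finset (Fin p → ℕ) :=
  (Fintype.piFinset fun _ => Finset.range (r + 1)).filter fun s => ∑ j, s j ≤ r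

lemma mem_SI {p r : ℕ} (s : Fin p → ℕ) : s ∈ SI p r ↔ ∑ j, s j ≤ r := by
  unfold SI
  simp only [Finset.mem_filter, Fintype.mem_piFinset, Finset.mem_range, and_iff_right_iff_imp]
  intro h j
  have := Finset.single_le_sum (f := s) (fun i _ => Nat.zero_le _) (Finset.mem_univ j)
  omega

/-- Taylor polynomial -/
def TP {p : ℕ} (r : ℕ) (f : (Fin p → ℝ) → ℝ) (a x : Fin p → ℝ) : ℝ :=
  ∑ s ∈ SI p r, mderiv s f a / (∏ j, ((s j).factorial : ℝ)) * ∏ j, (x j - a j) ^ (s j)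

lemma TP_self {p : ℕ} (r : ℕ) (f : (Fin p → ℝ) → ℝ) (a : Fin p → ℝ) : TP r f a a = f a := by
  unfold TP
  rw [Finset.sum_eq_single 0]
  · simp [mderiv_zero]
  · intro s _ hs
    obtain ⟨j, hj⟩ : ∃ j, s j ≠ 0 := by
      by_contra h; push Not at h; exact hs (funext h)
    rw [Finset.prod_eq_zero (f := fun j => (a j - a j) ^ s j) (Finset.mem_univ j) (by simp [hj]), mul_zero]
  · intro h; exact absurd ((mem_SI _).2 (by simp)) h

lemma hasFDerivAt_monom {p : ℕ} (s : Fin p → ℕ) (a x : Fin p → ℝ) :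
    HasFDerivAt (fun x : Fin p → ℝ => ∏ j, (x j - a j) ^ (s j))
      (∑ i, (∏ j ∈ Finset.univ.erase i, (x j - a j) ^ (s j)) •
        (((s i : ℝ) * (x i - a i) ^ (s i - 1)) • ContinuousLinearMap.proj (R := ℝ) (φ := fun _ : Fin p => ℝ) i)) x := by
  apply HasFDerivAt.finsetProd
  intro i _
  have h : HasFDerivAt (fun x : Fin p → ℝ => x i - a i) (ContinuousLinearMap.proj (R := ℝ) (φ := fun _ : Fin p => ℝ) i) x :=
    (hasFDerivAt_apply i x).sub_const (a i)
  simpa using h.pow (s i)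

lemma pd_monom {p : ℕ} (s : Fin p → ℕ) (a x : Fin p → ℝ) (i : Fin p) :
    fderiv ℝ (fun x : Fin p → ℝ => ∏ j, (x j - a j) ^ (s j)) x (Pi.single i 1) =
      (∏ j ∈ Finset.univ.erase i, (x j - a j) ^ (s j)) * ((s i : ℝ) * (x i - a i) ^ (s i - 1)) := by
  rw [(hasFDerivAt_monom s a x).fderiv]
  simp [Pi.single_apply]

lemma diff_TP {p : ℕ} (r : ℕ) (f : (Fin p → ℝ) → ℝ) (a : Fin p → ℝ) :
    Differentiable ℝ (TP r f a) := by
  unfold TP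
  intro x
  apply DifferentiableAt.fun_sum
  intro s _
  exact (hasFDerivAt_monom s a x).differentiableAt.const_mul _

lemma pd_TP {p : ℕ} (r : ℕ) (f : (Fin p → ℝ) → ℝ) (hf : ContDiff ℝ ((r + 1 : ℕ)) f)
    (a x : Fin p → ℝ) (i : Fin p) :
    fderiv ℝ (TP (r + 1) f a) x (Pi.single i 1) = TP r (pderiv1 i f) a x := by
  have h1 : HasFDerivAt (TP (r + 1) f a) (∑ s ∈ SI p (r + 1),
      (mderiv s f a / (∏ j, ((s j).factorial : ℝ))) •
        fderiv ℝ (fun x : Fin p → ℝ => ∏ j, (x j - a j) ^ (s j)) x) x := by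
    unfold TP
    apply HasFDerivAt.fun_sum
    intro s _
    exact (hasFDerivAt_monom s a x).differentiableAt.hasFDerivAt.const_mul _
  rw [h1.fderiv, _root_.sum_apply]
  simp only [_root_.smul_apply, pd_monom, smul_eq_mul]
  rw [← Finset.sum_filter_of_ne (p := fun s : Fin p → ℕ => s i ≠ 0)]
  · unfold TP
    symm
    refine Finset.sum_nbij' (fun s => s + (Pi.single i 1 : Fin p → ℕ)) (fun s => s - (Pi.single i 1 : Fin p → ℕ)) ?_ ?_ ?_ ?_ ?_
    · intro s hs
      rw [mem_SI] at hs
      simp only [Finset.mem_filter, mem_SI, Pi.add_apply, Finset.sum_add_distrib]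
      simp; exact hs
    · intro s hs
      simp only [Finset.mem_filter, mem_SI] at hs
      rw [mem_SI]
      have hle : (Pi.single i 1 : Fin p → ℕ) ≤ s := by
        intro j
        by_cases h : j = i
        · subst h; simp; omega
        · simp [h]
      have : ∑ j, s j = ∑ j, (s - Pi.single i 1 : Fin p → ℕ) j + ∑ j, (Pi.single i 1 : Fin p → ℕ) j := by
        rw [← Finset.sum_add_distrib]
        refine Finset.sum_congr rfl fun j _ => ?_
        have h3 : (Pi.single i 1 : Fin p → ℕ) j ≤ s j := hle j
        simp only [Pi.sub_apply]
        exact (Nat.sub_add_cancel h3).symm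
      simp at this hs ⊢
      omega
    · intro s _; simp
    · intro s hs
      simp only [Finset.mem_filter, mem_SI] at hs
      funext j
      by_cases h : j = i
      · subst h; simp; omega
      · simp [h]
    · intro s hs
      rw [mem_SI] at hs
      obtain ⟨t, ht⟩ : ∃ t : Fin p → ℕ, t = s + Pi.single i 1 := ⟨_, rfl⟩
      have hti : t i = s i + 1 := by rw [ht]; simp
      have htj : ∀ j ∈ Finset.univ.erase i, t j = s j := fun j hj => by
        rw [ht]; simp [Finset.ne_of_mem_erase hj]
      have hmd : mderiv t f = mderiv s (pderiv1 i f) := by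
        rw [ht]; exact mderiv_add_single i s f (hf.of_le (by norm_cast; omega))
      have key : mderiv s (pderiv1 i f) a / (∏ j, ((s j).factorial : ℝ)) * ∏ j, (x j - a j) ^ (s j)
          = mderiv t f a / (∏ j, ((t j).factorial : ℝ)) *
            ((∏ j ∈ Finset.univ.erase i, (x j - a j) ^ (t j)) *
              ((t i : ℝ) * (x i - a i) ^ (t i - 1))) := by
        rw [← Finset.mul_prod_erase Finset.univ (fun j => ((s j).factorial : ℝ)) (Finset.mem_univ i),
          ← Finset.mul_prod_erase Finset.univ (fun j => ((t j).factorial : ℝ)) (Finset.mem_univ i),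
          ← Finset.mul_prod_erase Finset.univ (fun j => (x j - a j) ^ (s j)) (Finset.mem_univ i)]
        have e1 : ∏ j ∈ Finset.univ.erase i, ((t j).factorial : ℝ)
            = ∏ j ∈ Finset.univ.erase i, ((s j).factorial : ℝ) :=
          Finset.prod_congr rfl fun j hj => by rw [htj j hj]
        have e2 : ∏ j ∈ Finset.univ.erase i, (x j - a j) ^ (t j)
            = ∏ j ∈ Finset.univ.erase i, (x j - a j) ^ (s j) :=
          Finset.prod_congr rfl fun j hj => by rw [htj j hj]
        rw [e1, e2, hmd, hti]
        have h0 : ∏ j ∈ Finset.univ.erase i, ((s j).factorial : ℝ) ≠ 0 :=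
          Finset.prod_ne_zero_iff.2 fun j _ => by positivity
        have h2 : ((s i).factorial : ℝ) ≠ 0 := by positivity
        have h3 : (s i : ℝ) + 1 ≠ 0 := by positivity
        simp only [Nat.factorial_succ, Nat.add_sub_cancel]
        push_cast
        field_simp
      rw [ht] at key
      convert key
  · intro s _ h h0
    apply h
    simp [h0]

lemma convex_cube (p : ℕ) : Convex ℝ (cube p) := by
  have : cube p = Set.Icc 0 1 := by
    ext x; simp [cube, Set.mem_Icc, Pi.le_def, forall_and]
  rw [this]; exact convex_Icc 0 1

lemma clm_bound {p : ℕ} (L : (Fin p → ℝ) →L[ℝ] ℝ) (C : ℝ)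
    (h : ∀ i, |L (Pi.single i 1)| ≤ C) : ‖L‖ ≤ p * C := by
  rcases Nat.eq_zero_or_pos p with hp | hp
  · subst hp
    have : L = 0 := by ext x; rw [Subsingleton.elim x 0, map_zero, map_zero]
    simp [this]
  have hC : 0 ≤ C := (abs_nonneg _).trans (h ⟨0, hp⟩)
  refine L.opNorm_le_bound (by positivity) fun x => ?_
  have hx : L x = ∑ i, x i * L (Pi.single i 1) := by
    conv_lhs => rw [← Finset.univ_sum_single x]
    rw [map_sum]
    refine Finset.sum_congr rfl fun i _ => ?_
    rw [← smul_eq_mul, ← map_smul]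
    congr 1
    ext j; simp [Pi.single_apply]
  rw [hx]
  calc ‖∑ i, x i * L (Pi.single i 1)‖ ≤ ∑ i, ‖x i * L (Pi.single i 1)‖ := norm_sum_le _ _
    _ ≤ ∑ _i : Fin p, ‖x‖ * C := by
        refine Finset.sum_le_sum fun i _ => ?_
        rw [norm_mul]
        exact mul_le_mul (norm_le_pi_norm x i) (h i) (norm_nonneg _) (norm_nonneg _)
    _ = p * C * ‖x‖ := by simp; ring

lemma taylor_bound {p : ℕ} (L β : ℝ) (hβ : 0 ≤ β) (r : ℕ) :
    ∀ f : (Fin p → ℝ) → ℝ, ContDiff ℝ (r : ℕ) f →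
    (∀ s : Fin p → ℕ, ∑ j, s j = r → ∀ x ∈ cube p, ∀ y ∈ cube p,
      |mderiv s f x - mderiv s f y| ≤ L * ‖x - y‖ ^ β) →
    ∀ a ∈ cube p, ∀ x ∈ cube p, |f x - TP r f a x| ≤ p ^ r * L * ‖x - a‖ ^ (r + β) := by
  induction r with
  | zero =>
    intro f _ h a ha x hx
    have := h 0 (by simp) x hx a ha
    rw [mderiv_zero] at this
    have h2 : TP 0 f a x = f a := by
      unfold TP
      rw [Finset.sum_eq_single 0]
      · simp [mderiv_zero]
      · intro s hs h0
        rw [mem_SI] at hs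
        exfalso; apply h0; funext j
        have := Finset.single_le_sum (f := s) (fun i _ => Nat.zero_le _) (Finset.mem_univ j)
        simp; omega
      · intro h; exact absurd ((mem_SI _).2 (by simp)) h
    simpa [h2] using this
  | succ r ih =>
    intro f hf h a ha x hx
    set G := fun y => f y - TP (r + 1) f a y with hG
    have hfd : Differentiable ℝ f := hf.differentiable (by simp)
    have hGa : G a = 0 := by simp [hG, TP_self]
    have hseg : segment ℝ a x ⊆ cube p := (convex_cube p).segment_subset ha hx
    have hLn : 0 ≤ (p : ℝ) ^ r * L * ‖x - a‖ ^ (r + β) ∨ p = 0 := by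
      by_cases hp : p = 0
      · right; exact hp
      left
      have hp' : 0 < p := Nat.pos_of_ne_zero hp
      have h0 : (0 : Fin p → ℝ) ∈ cube p := fun j => by simp
      have h1 : (1 : Fin p → ℝ) ∈ cube p := fun j => by simp
      have := h (Pi.single ⟨0, hp'⟩ (r + 1)) (by simp) 0 h0 1 h1
      have hn : ‖(0 : Fin p → ℝ) - 1‖ = 1 := by
        have : Nonempty (Fin p) := ⟨⟨0, hp'⟩⟩
        simp
      rw [hn, one_rpow, mul_one] at this
      have hL := (abs_nonneg _).trans this
      positivity
    have key := (convex_segment a x).norm_image_sub_le_of_norm_fderiv_le (f := G) (𝕜 := ℝ)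
      (C := p * ((p : ℝ) ^ r * L * ‖x - a‖ ^ (r + β)))
      (fun y _ => (hfd y).sub (diff_TP _ _ _ y)) ?_
      (left_mem_segment ℝ a x) (right_mem_segment ℝ a x)
    · rw [hGa, sub_zero] at key
      change |G x| ≤ _
      rw [← Real.norm_eq_abs]
      refine key.trans (le_of_eq ?_)
      push_cast
      rcases eq_or_ne (‖x - a‖) 0 with h0 | h0
      · rw [h0, mul_zero, zero_rpow (by positivity), mul_zero]
      · rw [show (r : ℝ) + 1 + β = (r + β) + 1 by ring, rpow_add_one h0]
        ring
    · intro y hy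
      apply clm_bound
      intro i
      have e : fderiv ℝ G y (Pi.single i 1) = pderiv1 i f y - TP r (pderiv1 i f) a y := by
        rw [hG, fderiv_fun_sub (hfd y) (diff_TP _ _ _ y), _root_.sub_apply, pd_TP r f hf]
        rfl
      rw [e]
      have hb := ih (pderiv1 i f) (contDiff_pd i hf) ?_ a ha y (hseg hy)
      · refine hb.trans ?_
        have hya : ‖y - a‖ ≤ ‖x - a‖ := by
          obtain ⟨t, ht, rfl⟩ := (segment_eq_image' ℝ a x) ▸ hy
          simp only [add_sub_cancel_left, norm_smul, Real.norm_eq_abs, abs_of_nonneg ht.1]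
          exact mul_le_of_le_one_left (norm_nonneg _) ht.2
        rcases hLn with hLn | hp0
        · rcases eq_or_ne ((p : ℝ) ^ r * L) 0 with h0 | h0
          · simp [h0]
          have hpl : 0 ≤ (p : ℝ) ^ r * L := by
            have h0' : (0 : Fin p → ℝ) ∈ cube p := fun j => by simp
            have h1 : (1 : Fin p → ℝ) ∈ cube p := fun j => by simp
            have := h (Pi.single i (r + 1)) (by simp) 0 h0' 1 h1
            have hn : ‖(0 : Fin p → ℝ) - 1‖ = 1 := by
              have : Nonempty (Fin p) := ⟨i⟩
              simp
            rw [hn, one_rpow, mul_one] at this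
            have hL := (abs_nonneg _).trans this
            positivity
          gcongr
        · subst hp0; exact i.elim0
      · intro s hs u hu v hv
        rw [← mderiv_add_single i s f (hf.of_le (by norm_cast; omega))]
        apply h _ _ u hu v hv
        simp [Finset.sum_add_distrib, hs]

end

section
open ProbabilityTheory

lemma chernoff {E : Type*} [MeasurableSpace E] (P : Measure E) [IsProbabilityMeasure P] (n : ℕ)
    (W : E → ℝ) (hW : Measurable W) (R : ℝ) (hR0 : 0 ≤ R)
    (hR : ∫⁻ e, ENNReal.ofReal (exp (W e)) ∂P ≤ ENNReal.ofReal R) :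
    Measure.pi (fun _ : Fin n => P) {d | 0 ≤ ∑ i, W (d i)} ≤ ENNReal.ofReal (R ^ n) := by
  have hint : Integrable (fun e => exp (W e)) P := by
    refine ⟨hW.exp.aestronglyMeasurable, ?_⟩
    rw [hasFiniteIntegral_iff_ofReal (ae_of_all _ fun e => (exp_pos _).le)]
    exact hR.trans_lt ENNReal.ofReal_lt_top
  have hle : ∫ e, exp (W e) ∂P ≤ R := by
    rw [integral_eq_lintegral_of_nonneg_ae (ae_of_all _ fun e => (exp_pos _).le)
      hW.exp.aestronglyMeasurable]
    exact ENNReal.toReal_le_of_le_ofReal hR0 hR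
  have hint2 : Integrable (fun d : Fin n → E => ∏ i, exp (W (d i)))
      (Measure.pi (fun _ : Fin n => P)) :=
    Integrable.fintype_prod (f := fun _ e => exp (W e)) (fun _ => hint)
  have h1 := mul_meas_ge_le_integral_of_nonneg (μ := Measure.pi (fun _ : Fin n => P))
    (f := fun d : Fin n → E => ∏ i, exp (W (d i)))
    (ae_of_all _ fun d => Finset.prod_nonneg fun i _ => (exp_pos _).le) hint2 1
  rw [integral_fintype_prod_eq_pow (fun e => exp (W e)), one_mul, Fintype.card_fin] at h1
  have h2 : {d : Fin n → E | 0 ≤ ∑ i, W (d i)} = {d | 1 ≤ ∏ i, exp (W (d i))} := by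
    ext d
    simp only [Set.mem_ofPred_eq]
    rw [← exp_sum, one_le_exp_iff]
  rw [h2]
  have h3 := h1.trans (pow_le_pow_left₀ (integral_nonneg fun e => (exp_pos _).le) hle n)
  rw [measureReal_def] at h3
  rw [← ENNReal.ofReal_toReal (measure_ne_top (Measure.pi (fun _ : Fin n => P)) {d | 1 ≤ ∏ i, exp (W (d i))})]
  exact ENNReal.ofReal_le_ofReal h3

lemma integral_exp_gauss (v : ℝ≥0) (b : ℝ) :
    ∫ z, exp (b * z) ∂(gaussianReal 0 v) = exp (v * b ^ 2 / 2) := by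
  have := congrFun (mgf_fun_id_gaussianReal (μ := 0) (v := v)) b
  simpa [mgf] using this

lemma lint_exp_gauss (v : ℝ≥0) (a b : ℝ) :
    ∫⁻ z, ENNReal.ofReal (exp (a + b * z)) ∂(gaussianReal 0 v)
      = ENNReal.ofReal (exp (a + v * b ^ 2 / 2)) := by
  have hi := (integrable_exp_mul_gaussianReal (μ := 0) (v := v) b).const_mul (exp a)
  rw [← ofReal_integral_eq_lintegral_ofReal]
  · simp_rw [exp_add]
    rw [integral_const_mul, integral_exp_gauss]
  · simpa [exp_add] using hi
  · exact ae_of_all _ fun e => (exp_pos _).le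

lemma inner_bound (v : ℝ≥0) (lam A A' g D τ : ℝ) (hl : 0 < lam) (hlv : 8 * lam * v = 1)
    (hA : 0 < A) (hA' : 0 ≤ A') (hg : |g| ≤ A) (hD : 0 ≤ D) (hDA : D ≤ A) :
    ∫⁻ z, ENNReal.ofReal (exp (-lam * (g ^ 2 - 2 * z * g) + lam * D * (A' + 2 * |z|) + τ))
        ∂(gaussianReal 0 v)
      ≤ ENNReal.ofReal (exp τ * (1 - (lam / (1 + lam * A ^ 2)) * g ^ 2 / 2
        + ((1 / A) * exp (2 * lam * A * A') * (2 * exp (v * (4 * lam * A) ^ 2 / 2))) * D / 2)) := by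
  set κ := (D / A) * exp (2 * lam * A * A') with hκ
  have hκ0 : 0 ≤ κ := by positivity
  set H : ℝ → ℝ := fun z => exp τ / 2 * (exp (-2 * lam * g ^ 2) * exp ((4 * lam * g) * z) +
    (1 + κ * (exp ((4 * lam * A) * z) + exp ((-(4 * lam * A)) * z)))) with hH
  have i1 := integrable_exp_mul_gaussianReal (μ := 0) (v := v) (4 * lam * g)
  have i2 := integrable_exp_mul_gaussianReal (μ := 0) (v := v) (4 * lam * A)
  have i3 := integrable_exp_mul_gaussianReal (μ := 0) (v := v) (-(4 * lam * A))
  have i4 : Integrable (fun z => κ * (exp ((4 * lam * A) * z) + exp ((-(4 * lam * A)) * z)))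
      (gaussianReal 0 v) := (i2.add i3).const_mul κ
  have i5 : Integrable (fun z => 1 + κ * (exp ((4 * lam * A) * z) + exp ((-(4 * lam * A)) * z)))
      (gaussianReal 0 v) := (integrable_const 1).add i4
  have i6 : Integrable (fun z => exp (-2 * lam * g ^ 2) * exp ((4 * lam * g) * z))
      (gaussianReal 0 v) := i1.const_mul _
  have hHi : Integrable H (gaussianReal 0 v) := (i6.add i5).const_mul _
  have hH0 : ∀ z, 0 ≤ H z := fun z => by positivity
  have hHint : ∫ z, H z ∂(gaussianReal 0 v) = exp τ / 2 * (exp (-lam * g ^ 2) +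
      (1 + κ * (2 * exp (v * (4 * lam * A) ^ 2 / 2)))) := by
    simp only [hH]
    rw [integral_const_mul, integral_add i6 i5, integral_const_mul, integral_add (integrable_const 1) i4,
      integral_const_mul, integral_add i2 i3]
    simp only [integral_exp_gauss]
    rw [← exp_add]
    have e1 : -2 * lam * g ^ 2 + v * (4 * lam * g) ^ 2 / 2 = -lam * g ^ 2 := by
      have : (v : ℝ) * (4 * lam * g) ^ 2 / 2 = (8 * lam * v) * (lam * g ^ 2) := by ring
      rw [this, hlv]; ring
    rw [e1]
    simp only [integral_const, probReal_univ, smul_eq_mul, one_mul, even_two, Even.neg_pow]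
    ring
  calc ∫⁻ z, ENNReal.ofReal (exp (-lam * (g ^ 2 - 2 * z * g) + lam * D * (A' + 2 * |z|) + τ))
        ∂(gaussianReal 0 v)
      ≤ ∫⁻ z, ENNReal.ofReal (H z) ∂(gaussianReal 0 v) := by
        refine lintegral_mono fun z => ENNReal.ofReal_le_ofReal ?_
        set u := -lam * (g ^ 2 - 2 * z * g)
        set w := lam * D * (A' + 2 * |z|) with hw
        have h1 : exp (u + w) ≤ (exp (2 * u) + exp (2 * w)) / 2 := by
          have e1 : exp (2 * u) = exp u ^ 2 := by rw [← exp_nat_mul]; norm_num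
          have e2 : exp (2 * w) = exp w ^ 2 := by rw [← exp_nat_mul]; norm_num
          rw [exp_add, e1, e2]
          nlinarith [sq_nonneg (exp u - exp w)]
        have h2 : exp (2 * u) = exp (-2 * lam * g ^ 2) * exp ((4 * lam * g) * z) := by
          rw [← exp_add]; congr 1; simp only [u]; ring
        have h3 : exp (2 * w) ≤ 1 + κ * (exp ((4 * lam * A) * z) + exp ((-(4 * lam * A)) * z)) := by
          set q := 2 * lam * A * (A' + 2 * |z|) with hq
          have hth : 0 ≤ D / A := by positivity
          have hth1 : D / A ≤ 1 := (div_le_one hA).2 hDA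
          have hc := convexOn_exp.2 (Set.mem_univ (0 : ℝ)) (Set.mem_univ q)
            (sub_nonneg.2 hth1) hth (by ring)
          simp only [smul_eq_mul, mul_zero, zero_add, exp_zero, mul_one] at hc
          have e1 : D / A * q = 2 * w := by rw [hq, hw]; field_simp
          rw [e1] at hc
          have e2 : exp q ≤ exp (2 * lam * A * A') * (exp ((4 * lam * A) * z) + exp ((-(4 * lam * A)) * z)) := by
            have : q = 2 * lam * A * A' + 4 * lam * A * |z| := by rw [hq]; ring
            rw [this, exp_add]
            refine mul_le_mul_of_nonneg_left ?_ (exp_pos _).le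
            rcases abs_cases z with ⟨h, _⟩ | ⟨h, _⟩ <;> rw [h]
            · linarith [exp_pos ((-(4 * lam * A)) * z)]
            · rw [mul_neg, ← neg_mul]; linarith [exp_pos ((4 * lam * A) * z)]
          calc exp (2 * w) ≤ 1 - D / A + D / A * exp q := hc
            _ ≤ 1 + D / A * (exp (2 * lam * A * A') * (exp ((4 * lam * A) * z) + exp ((-(4 * lam * A)) * z))) := by
              have := mul_le_mul_of_nonneg_left e2 hth
              linarith
            _ = _ := by rw [hκ]; ring
        rw [exp_add, hH]
        have := mul_le_mul_of_nonneg_left h1 (exp_pos τ).le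
        have h4 := mul_le_mul_of_nonneg_left h3 (exp_pos τ).le
        rw [h2] at this
        simp only
        nlinarith
    _ = ENNReal.ofReal (∫ z, H z ∂(gaussianReal 0 v)) :=
        (ofReal_integral_eq_lintegral_ofReal hHi (ae_of_all _ hH0)).symm
    _ ≤ _ := by
        apply ENNReal.ofReal_le_ofReal
        rw [hHint]
        have h5 : exp (-lam * g ^ 2) ≤ 1 - (lam / (1 + lam * A ^ 2)) * g ^ 2 := by
          have hg2 : g ^ 2 ≤ A ^ 2 := sq_le_sq' (abs_le.1 hg).1 (abs_le.1 hg).2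
          have hs : 0 ≤ lam * g ^ 2 := by positivity
          have h6 : exp (-lam * g ^ 2) ≤ 1 / (1 + lam * g ^ 2) := by
            rw [neg_mul, Real.exp_neg, ← one_div]
            exact one_div_le_one_div_of_le (by positivity) (by linarith [add_one_le_exp (lam * g ^ 2)])
          have h7 : 1 / (1 + lam * g ^ 2) = 1 - (lam * g ^ 2) / (1 + lam * g ^ 2) := by
            field_simp; ring
          have h8 : (lam * g ^ 2) / (1 + lam * A ^ 2) ≤ (lam * g ^ 2) / (1 + lam * g ^ 2) := by
            gcongr
          have h9 : (lam / (1 + lam * A ^ 2)) * g ^ 2 = (lam * g ^ 2) / (1 + lam * A ^ 2) := by ring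
          rw [h9]; linarith
        have e3 : exp τ * (1 - (lam / (1 + lam * A ^ 2)) * g ^ 2 / 2
          + ((1 / A) * exp (2 * lam * A * A') * (2 * exp (v * (4 * lam * A) ^ 2 / 2))) * D / 2)
          = exp τ / 2 * ((1 - (lam / (1 + lam * A ^ 2)) * g ^ 2) +
            (1 + κ * (2 * exp (v * (4 * lam * A) ^ 2 / 2)))) := by
          rw [hκ]; ring
        rw [e3]
        gcongr

/-- law of the covariate -/
def nuX (p : ℕ) (px : (Fin p → ℝ) → ℝ) : Measure (Fin p → ℝ) :=
  (volume.restrict (cube p)).withDensity fun x => ENNReal.ofReal (px x)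

lemma cube_eq (p : ℕ) : cube p = Set.pi Set.univ fun _ => Set.Icc (0 : ℝ) 1 := by
  ext x; simp only [cube, Set.mem_pi, Set.mem_univ, true_implies, Set.mem_Icc]; rfl

lemma meas_cube (p : ℕ) : MeasurableSet (cube p) := by
  rw [cube_eq]; exact MeasurableSet.univ_pi fun _ => measurableSet_Icc

lemma gaussD_eq (σ : ℝ) (hσ : 0 < σ) (v : ℝ≥0) (hv : (v : ℝ) = σ ^ 2) (z : ℝ) :
    gaussD σ z = gaussianPDFReal 0 v z := by
  unfold gaussD gaussianPDFReal
  simp only [sub_zero, hv]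
  congr 2
  rw [mul_comm (2 * π), Real.sqrt_mul (sq_nonneg σ), Real.sqrt_sq hσ.le]

lemma meas_gaussD (σ : ℝ) : Measurable (gaussD σ) := by
  unfold gaussD; fun_prop

lemma lint_true {p : ℕ} (px f₀ : (Fin p → ℝ) → ℝ) (hpxm : Measurable px) (hf : Measurable f₀)
    (hpx0 : ∀ x ∈ cube p, 0 ≤ px x) (σ : ℝ) (hσ : 0 < σ) (v : ℝ≥0) (hv : (v : ℝ) = σ ^ 2)
    (F : (Fin p → ℝ) × ℝ → ℝ≥0∞) (hF : Measurable F) :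
    ∫⁻ e, F e ∂(trueMeas p px f₀ σ) =
      ∫⁻ x, ∫⁻ z, F (x, f₀ x + z) ∂(gaussianReal 0 v) ∂(nuX p px) := by
  have hv0 : v ≠ 0 := by
    intro h
    rw [h, NNReal.coe_zero] at hv
    exact (pow_pos hσ 2).ne hv
  have hg := meas_gaussD σ
  have hI : Measurable ((cube p).indicator px) := hpxm.indicator (meas_cube p)
  have hd : Measurable fun xy : (Fin p → ℝ) × ℝ =>
      ENNReal.ofReal ((cube p).indicator px xy.1 * gaussD σ (xy.2 - f₀ xy.1)) := by
    refine ENNReal.measurable_ofReal.comp ((hI.comp measurable_fst).mul (hg.comp ?_))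
    exact measurable_snd.sub (hf.comp measurable_fst)
  have hin : Measurable fun x => ∫⁻ z, F (x, f₀ x + z) ∂(gaussianReal 0 v) := by
    refine Measurable.lintegral_prod_right' (f := fun q : (Fin p → ℝ) × ℝ => F (q.1, f₀ q.1 + q.2)) ?_
    exact hF.comp (measurable_fst.prodMk ((hf.comp measurable_fst).add measurable_snd))
  have hpx' : Measurable fun x => ENNReal.ofReal (px x) := ENNReal.measurable_ofReal.comp hpxm
  unfold trueMeas nuX
  rw [lintegral_withDensity_eq_lintegral_mul _ hd hF,
    lintegral_withDensity_eq_lintegral_mul _ hpx' hin,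
    Measure.volume_eq_prod, lintegral_prod _ ((hd.mul hF).aemeasurable), ← lintegral_indicator (meas_cube p)]
  refine lintegral_congr fun x => ?_
  simp only [Pi.mul_apply]
  by_cases hx : x ∈ cube p
  · simp only [Set.indicator_of_mem hx, Pi.mul_apply, Function.comp]
    have hFx : Measurable fun z => F (x, f₀ x + z) :=
      hF.comp (measurable_const.prodMk (measurable_const.add measurable_id))
    rw [gaussianReal_of_var_ne_zero _ hv0, lintegral_withDensity_eq_lintegral_mul _ (measurable_gaussianPDF _ _) hFx]
    rw [← lintegral_add_left_eq_self _ (f₀ x), ← lintegral_const_mul]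
    · refine lintegral_congr fun z => ?_
      simp only [Pi.mul_apply, gaussianPDF, add_sub_cancel_left, gaussD_eq σ hσ v hv]
      rw [ENNReal.ofReal_mul (hpx0 x hx), mul_assoc]
    · exact (measurable_gaussianPDF _ _).mul hFx
  · simp [Set.indicator_of_notMem hx]

lemma vol_cube (p : ℕ) : volume (cube p) = 1 := by
  rw [cube_eq, volume_pi_pi]; simp

lemma prob_nuX {p : ℕ} (px : (Fin p → ℝ) → ℝ) 
    (hpx0 : ∀ x ∈ cube p, 0 ≤ px x) (hpx1 : (∫ x in cube p, px x) = 1) :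
    IsProbabilityMeasure (nuX p px) := by
  constructor
  unfold nuX
  rw [withDensity_apply _ MeasurableSet.univ, Measure.restrict_univ]
  have hi : Integrable px (volume.restrict (cube p)) := by
    by_contra h
    rw [integral_undef h] at hpx1; simp at hpx1
  rw [← ofReal_integral_eq_lintegral_ofReal hi, hpx1, ENNReal.ofReal_one]
  exact (ae_restrict_iff' (meas_cube p)).2 (ae_of_all _ hpx0)

lemma ae_nuX {p : ℕ} (px : (Fin p → ℝ) → ℝ) : ∀ᵐ x ∂(nuX p px), x ∈ cube p := by
  have : nuX p px ≪ volume.restrict (cube p) := withDensity_absolutelyContinuous _ _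
  exact this (ae_restrict_mem (meas_cube p))

lemma integral_nuX {p : ℕ} (px : (Fin p → ℝ) → ℝ) (hpxm : Measurable px)
    (hpx0 : ∀ x ∈ cube p, 0 ≤ px x) (g : (Fin p → ℝ) → ℝ) :
    ∫ x, g x ∂(nuX p px) = ∫ x in cube p, g x * px x := by
  have hpx' : Measurable fun x => ENNReal.ofReal (px x) := ENNReal.measurable_ofReal.comp hpxm
  unfold nuX
  rw [integral_withDensity_eq_integral_toReal_smul hpx'
    (ae_of_all _ fun x => ENNReal.ofReal_lt_top)]
  refine setIntegral_congr_fun (meas_cube p) fun x hx => ?_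
  simp only [Function.comp, smul_eq_mul]
  rw [ENNReal.toReal_ofReal (hpx0 x hx), mul_comm]

lemma prob_true {p : ℕ} (px f₀ : (Fin p → ℝ) → ℝ) (hpxm : Measurable px) (hf : Measurable f₀)
    (hpx0 : ∀ x ∈ cube p, 0 ≤ px x) (hpx1 : (∫ x in cube p, px x) = 1) (σ : ℝ) (hσ : 0 < σ) :
    IsProbabilityMeasure (trueMeas p px f₀ σ) := by
  have := prob_nuX px hpx0 hpx1
  constructor
  have h := lint_true px f₀ hpxm hf hpx0 σ hσ (σ ^ 2).toNNReal (Real.coe_toNNReal _ (sq_nonneg σ)) (fun _ => 1) measurable_const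
  simpa using h

lemma ae_true {p : ℕ} (px f₀ : (Fin p → ℝ) → ℝ) (hpxm : Measurable px) (hf : Measurable f₀)
    (hpx0 : ∀ x ∈ cube p, 0 ≤ px x) (σ : ℝ) (hσ : 0 < σ) :
    ∀ᵐ e ∂(trueMeas p px f₀ σ), e.1 ∈ cube p := by
  have hm : MeasurableSet {e : (Fin p → ℝ) × ℝ | e.1 ∈ cube p}ᶜ :=
    (measurable_fst (meas_cube p)).compl
  have h := lint_true px f₀ hpxm hf hpx0 σ hσ (σ ^ 2).toNNReal (Real.coe_toNNReal _ (sq_nonneg σ)) ({e : (Fin p → ℝ) × ℝ | e.1 ∈ cube p}ᶜ.indicator 1)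
    (measurable_one.indicator hm)
  rw [lintegral_indicator_one hm] at h
  rw [ae_iff]
  change trueMeas p px f₀ σ ({e : (Fin p → ℝ) × ℝ | e.1 ∈ cube p}ᶜ) = 0
  rw [h, lintegral_eq_zero_iff']
  · filter_upwards [ae_nuX px] with x hx
    simp [hx]
  · refine (Measurable.lintegral_prod_right' (f := fun q : (Fin p → ℝ) × ℝ => ({e : (Fin p → ℝ) × ℝ | e.1 ∈ cube p}ᶜ.indicator (1 : (Fin p → ℝ) × ℝ → ℝ≥0∞)) (q.1, f₀ q.1 + q.2)) ?_).aemeasurable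
    exact (measurable_one.indicator hm).comp (measurable_fst.prodMk ((hf.comp measurable_fst).add measurable_snd))

end

section
lemma exists_block {p K : ℕ} (hK : 0 < K) (x : Fin p → ℝ) (hx : x ∈ cube p) :
    ∃ k : Fin p → Fin K, x ∈ blockCl K k := by
  have hK' : (0 : ℝ) < K := by exact_mod_cast hK
  refine ⟨fun j => ⟨min ⌊x j * K⌋₊ (K - 1), by omega⟩, fun j => ?_⟩
  have h0 := (hx j).1
  have h1 := (hx j).2
  have hxk : 0 ≤ x j * K := by positivity
  simp only
  rw [div_le_iff₀ hK', le_div_iff₀ hK']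
  constructor
  · calc ((min ⌊x j * K⌋₊ (K - 1) : ℕ) : ℝ) ≤ (⌊x j * K⌋₊ : ℝ) := by exact_mod_cast min_le_left _ _
      _ ≤ _ := Nat.floor_le hxk
  · rcases le_total ⌊x j * K⌋₊ (K - 1) with h | h
    · rw [min_eq_left h]; exact (Nat.lt_floor_add_one _).le
    · rw [min_eq_right h, Nat.cast_sub hK]
      push_cast
      nlinarith

lemma blockCl_cube {p K : ℕ} (hK : 0 < K) (k : Fin p → Fin K) (x : Fin p → ℝ)
    (hx : x ∈ blockCl K k) : x ∈ cube p := by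
  have hK' : (0 : ℝ) < K := by exact_mod_cast hK
  intro j
  obtain ⟨h0, h1⟩ := hx j
  refine ⟨le_trans (by positivity) h0, h1.trans ?_⟩
  rw [div_le_one hK']
  have := (k j).2
  exact_mod_cast this

lemma center_mem {p K : ℕ} (hK : 0 < K) (k : Fin p → Fin K) : center K k ∈ blockCl K k := by
  have hK' : (0 : ℝ) < K := by exact_mod_cast hK
  intro j
  unfold center
  constructor
  · rw [div_le_div_iff₀ hK' (by positivity)]; nlinarith
  · rw [div_le_div_iff₀ (by positivity) hK']; nlinarith

/-- lower bound of the kernel sum -/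
def cz {p : ℕ} (φ : (Fin p → ℝ) → ℝ) (hmin : ℝ) : ℝ := φ (fun _ => 1 / hmin)

/-- validity of the centers and bandwidth -/
def valid {p : ℕ} (hmin hmax : ℝ) (K : ℕ) (h : ℝ) (μ : (Fin p → Fin K) → Fin p → ℝ) : Prop :=
  (K : ℝ) * h ∈ Set.Icc hmin hmax ∧ ∀ k, μ k ∈ blockCl K k

lemma norm_const' {p : ℕ} (hp : 0 < p) (c : ℝ) : ‖(fun _ : Fin p => c)‖ = |c| := by
  have : Nonempty (Fin p) := ⟨⟨0, hp⟩⟩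
  simp

lemma cz_pos {p : ℕ} (hp : 0 < p) (φ : (Fin p → ℝ) → ℝ) (hmin : ℝ) (hh1 : 1 < hmin)
    (hφpos : ∀ u : Fin p → ℝ, ‖u‖ < 1 → 0 < φ u) : 0 < cz φ hmin := by
  apply hφpos
  rw [norm_const' hp, abs_of_pos (by positivity), div_lt_one (by linarith)]
  exact hh1

lemma h_pos {p : ℕ} {hmin hmax : ℝ} {K : ℕ} {h : ℝ} {μ : (Fin p → Fin K) → Fin p → ℝ} (hK : 0 < K)
    (hh1 : 1 < hmin) (hv : valid hmin hmax K h μ) : 0 < h := by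
  have hK' : (0 : ℝ) < K := by exact_mod_cast hK
  have := hv.1.1
  by_contra hc
  push Not at hc
  nlinarith

lemma S_ge {p : ℕ} (hp : 0 < p) (φ : (Fin p → ℝ) → ℝ) (hφ : IsBoxedKernel φ) {hmin hmax : ℝ}
    {K : ℕ} {h : ℝ} {μ : (Fin p → Fin K) → Fin p → ℝ} (hK : 0 < K)
    (hh1 : 1 < hmin) (hv : valid hmin hmax K h μ) (x : Fin p → ℝ) (hx : x ∈ cube p) :
    cz φ hmin ≤ ∑ l : Fin p → Fin K, φ (fun j => (x j - μ l j) / h) := by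
  have hK' : (0 : ℝ) < K := by exact_mod_cast hK
  have hh := h_pos hK hh1 hv
  obtain ⟨k, hk⟩ := exists_block hK x hx
  have h1 : cz φ hmin ≤ φ (fun j => (x j - μ k j) / h) := by
    apply hφ.2.2.2
    rw [norm_const' hp, abs_of_pos (by positivity)]
    rw [pi_norm_le_iff_of_nonneg (by positivity)]
    intro j
    rw [Real.norm_eq_abs, abs_div, abs_of_pos hh, div_le_div_iff₀ hh (by linarith)]
    obtain ⟨a1, a2⟩ := hk j
    obtain ⟨b1, b2⟩ := hv.2 k j
    have h3 : |x j - μ k j| ≤ 1 / K := by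
      rw [add_div] at a2 b2
      rw [abs_le]; constructor <;> linarith
    have := hv.1.1
    calc |x j - μ k j| * hmin ≤ 1 / K * (K * h) := by gcongr
      _ = 1 * h := by field_simp
  exact h1.trans (Finset.single_le_sum (f := fun l => φ (fun j => (x j - μ l j) / h))
    (fun l _ => (hφ.2.1 _).1) (Finset.mem_univ k))

lemma weight_nonneg {p : ℕ} (φ : (Fin p → ℝ) → ℝ) (hφ : IsBoxedKernel φ) (K : ℕ) (h : ℝ)
    (μ : (Fin p → Fin K) → Fin p → ℝ) (k : Fin p → Fin K) (x : Fin p → ℝ) :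
    0 ≤ weight φ K h μ k x :=
  div_nonneg (hφ.2.1 _).1 (Finset.sum_nonneg fun _ _ => (hφ.2.1 _).1)

lemma weight_sum {p : ℕ} (hp : 0 < p) (φ : (Fin p → ℝ) → ℝ) (hφ : IsBoxedKernel φ) {hmin hmax : ℝ}
    {K : ℕ} {h : ℝ} {μ : (Fin p → Fin K) → Fin p → ℝ} (hK : 0 < K)
    (hh1 : 1 < hmin) (hv : valid hmin hmax K h μ)
    (hφpos : ∀ u : Fin p → ℝ, ‖u‖ < 1 → 0 < φ u) (x : Fin p → ℝ) (hx : x ∈ cube p) :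
    ∑ k, weight φ K h μ k x = 1 := by
  unfold weight
  rw [← Finset.sum_div]
  exact div_self ((cz_pos hp φ hmin hh1 hφpos).trans_le (S_ge hp φ hφ hK hh1 hv x hx)).ne'

lemma mono_le {p K m : ℕ} (hK : 0 < K) (k : Fin p → Fin K) (s : Fin p → Fin (m + 1))
    (x : Fin p → ℝ) (hx : x ∈ cube p) : |mono K m k s x| ≤ 1 := by
  unfold mono
  rw [Finset.abs_prod]
  refine Finset.prod_le_one (fun _ _ => abs_nonneg _) fun j _ => ?_
  rw [abs_pow]
  refine pow_le_one₀ (abs_nonneg _) ?_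
  have h1 := hx j
  have h2 := blockCl_cube hK k _ (center_mem hK k) j
  rw [abs_le]; constructor <;> linarith [h1.1, h1.2, h2.1, h2.2]

lemma kmp_bound {p m : ℕ} (hp : 0 < p) (φ : (Fin p → ℝ) → ℝ) (hφ : IsBoxedKernel φ) {hmin hmax : ℝ}
    {K : ℕ} {h : ℝ} {μ : (Fin p → Fin K) → Fin p → ℝ} (hK : 0 < K)
    (hh1 : 1 < hmin) (hv : valid hmin hmax K h μ)
    (hφpos : ∀ u : Fin p → ℝ, ‖u‖ < 1 → 0 < φ u)
    (ξ : (Fin p → Fin K) → (Fin p → Fin (m + 1)) → ℝ) (B : ℝ)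
    (hξ : ∀ k, ∀ s ∈ mIdx p m, |ξ k s| ≤ B) (x : Fin p → ℝ) (hx : x ∈ cube p) :
    |kmpFun φ K m h μ ξ x| ≤ (mIdx p m).card * B := by
  unfold kmpFun
  calc _ ≤ ∑ k, ∑ s ∈ mIdx p m, |ξ k s * weight φ K h μ k x * mono K m k s x| :=
        (Finset.abs_sum_le_sum_abs _ _).trans
          (Finset.sum_le_sum fun k _ => Finset.abs_sum_le_sum_abs _ _)
    _ ≤ ∑ k, ∑ s ∈ mIdx p m, B * weight φ K h μ k x := by
        refine Finset.sum_le_sum fun k _ => Finset.sum_le_sum fun s hs => ?_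
        rw [abs_mul, abs_mul, abs_of_nonneg (weight_nonneg φ hφ K h μ k x)]
        have h1 := mono_le (m := m) hK k s x hx
        have h2 := hξ k s hs
        have h3 := weight_nonneg φ hφ K h μ k x
        have hB : 0 ≤ B := (abs_nonneg _).trans h2
        calc |ξ k s| * weight φ K h μ k x * |mono K m k s x|
            ≤ B * weight φ K h μ k x * 1 := by gcongr
          _ = _ := mul_one _
    _ = (mIdx p m).card * B := by
        simp only [Finset.sum_const, nsmul_eq_mul]
        rw [← Finset.mul_sum, ← Finset.mul_sum, weight_sum hp φ hφ hK hh1 hv hφpos x hx, mul_one]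

lemma meas_kmp {p m : ℕ} (φ : (Fin p → ℝ) → ℝ) (hφ : IsBoxedKernel φ)
    {K : ℕ} (h : ℝ) (μ : (Fin p → Fin K) → Fin p → ℝ)
    (ξ : (Fin p → Fin K) → (Fin p → Fin (m + 1)) → ℝ) : Measurable (kmpFun φ K m h μ ξ) := by
  have hk : ∀ k, Measurable fun x : Fin p → ℝ => φ (fun j => (x j - μ k j) / h) := fun k =>
    hφ.1.measurable.comp (measurable_pi_lambda _ fun j => ((measurable_pi_apply j).sub_const _).div_const _)
  unfold kmpFun weight mono
  refine Finset.measurable_sum _ fun k _ => Finset.measurable_sum _ fun s _ => ?_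
  refine (measurable_const.mul ((hk k).div (Finset.measurable_sum _ fun l _ => hk l))).mul ?_
  exact Finset.measurable_prod _ fun j _ => ((measurable_pi_apply j).sub_const _).pow_const _

lemma euc_le {p : ℕ} (x : Fin p → ℝ) : eucNorm x ≤ Real.sqrt p * ‖x‖ := by
  unfold eucNorm
  rw [← Real.sqrt_sq (norm_nonneg x), ← Real.sqrt_mul (by positivity)]
  apply Real.sqrt_le_sqrt
  calc ∑ j, x j ^ 2 ≤ ∑ _j : Fin p, ‖x‖ ^ 2 := by
        refine Finset.sum_le_sum fun j _ => ?_
        rw [← sq_abs (x j)]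
        have := norm_le_pi_norm x j
        rw [Real.norm_eq_abs] at this
        gcongr
    _ = _ := by simp

lemma hOrder_lt {α : ℝ} (hα : 0 < α) : (hOrder α : ℝ) < α := by
  unfold hOrder
  rcases le_total 1 α with h | h
  · have := Nat.ceil_lt_add_one (sub_nonneg.2 h); linarith
  · rw [Nat.ceil_eq_zero.2 (by linarith)]; simpa using hα

lemma sum_mIdx {p m r : ℕ} (hr : r ≤ m) (F : (Fin p → ℕ) → ℝ) :
    ∑ s ∈ mIdx p m, (if ∑ j, (s j : ℕ) ≤ r then F (fun j => (s j : ℕ)) else 0)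
      = ∑ s ∈ SI p r, F s := by
  rw [← Finset.sum_filter]
  refine Finset.sum_nbij' (fun s j => (s j : ℕ)) (fun s j => Fin.ofNat (m + 1) (s j)) ?_ ?_ ?_ ?_ ?_
  · intro s hs
    rw [mem_SI]; exact (Finset.mem_filter.1 hs).2
  · intro s hs
    rw [mem_SI] at hs
    have hj : ∀ j, s j % (m + 1) = s j := fun j => by
      apply Nat.mod_eq_of_lt
      have := Finset.single_le_sum (f := s) (fun i _ => Nat.zero_le _) (Finset.mem_univ j)
      omega
    simp only [mIdx, Finset.mem_filter, Finset.mem_univ, true_and, Fin.ofNat, hj]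
    exact ⟨hs.trans hr, hs⟩
  · intro s _
    funext j
    ext
    simp [Fin.ofNat, Nat.mod_eq_of_lt (s j).2]
  · intro s hs
    rw [mem_SI] at hs
    funext j
    simp only [Fin.ofNat]
    apply Nat.mod_eq_of_lt
    have := Finset.single_le_sum (f := s) (fun i _ => Nat.zero_le _) (Finset.mem_univ j)
    omega
  · intro s _; rfl

lemma approx {p m : ℕ} (hp : 0 < p) (α B : ℝ) (hα : 0 < α) (hB : 0 < B)
    (hm : α ≤ (m : ℝ)) (hmin hmax : ℝ) (hh1 : 1 < hmin) (hh2 : hmin < hmax)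
    (φ : (Fin p → ℝ) → ℝ) (hφ : IsBoxedKernel φ)
    (hφpos : ∀ u : Fin p → ℝ, ‖u‖ < 1 → 0 < φ u)
    (f₀ : (Fin p → ℝ) → ℝ) (hf₀ : IsHolder p α B f₀) :
    ∃ Cst : ℝ, 0 < Cst ∧ ∀ K : ℕ, 0 < K → ∃ f, memSieve φ m B hmin hmax K f ∧ Measurable f ∧
      ∀ x ∈ cube p, |f x - f₀ x| ≤ Cst * (K : ℝ) ^ (-α) := by
  obtain ⟨hcd, B₁, B₂, hB1, hB2, hBB, hd, hH⟩ := hf₀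
  set r := hOrder α with hr
  set β := α - r with hβ
  have hrα := hOrder_lt hα
  have hβ0 : 0 < β := by rw [hβ]; linarith
  have hrm : r ≤ m := by
    have : (r : ℝ) ≤ m := by linarith
    exact_mod_cast this
  set L := B₂ * (Real.sqrt p) ^ β with hL
  have hL0 : 0 ≤ L := by positivity
  have hcd' : ContDiff ℝ (r : ℕ) f₀ := by exact_mod_cast hcd
  have htay := taylor_bound L β hβ0.le r f₀ hcd' (by
    intro s hs x hx y hy
    by_cases hxy : x = y
    · subst hxy
      simp only [sub_self, abs_zero]
      positivity
    have h1 := hH s hs x hx y hy hxy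
    have h2 : (degN s : ℝ) = r := by exact_mod_cast hs
    rw [h2] at h1
    refine h1.trans ?_
    rw [hL, mul_assoc, ← mul_rpow (by positivity) (norm_nonneg _)]
    have := euc_le (x - y)
    have h0 : 0 ≤ eucNorm (x - y) := Real.sqrt_nonneg _
    gcongr)
  refine ⟨p ^ r * L * hmin ^ α + 1, by positivity, fun K hK => ?_⟩
  have hK' : (0 : ℝ) < K := by exact_mod_cast hK
  set h := hmin / K with hh
  have hhp : 0 < h := by positivity
  set μ : (Fin p → Fin K) → Fin p → ℝ := fun k => center K k with hμ
  set ξ : (Fin p → Fin K) → (Fin p → Fin (m + 1)) → ℝ := fun k s =>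
    if ∑ j, (s j : ℕ) ≤ r then
      mderiv (fun j => (s j : ℕ)) f₀ (center K k) / (∏ j, ((s j : ℕ).factorial : ℝ)) else 0 with hξ
  have hKh : (K : ℝ) * h = hmin := by rw [hh]; field_simp
  have hv : valid hmin hmax K h μ := ⟨by rw [hKh]; exact ⟨le_rfl, hh2.le⟩, fun k => center_mem hK k⟩
  refine ⟨kmpFun φ K m h μ ξ, ⟨h, hv.1, μ, hv.2, ξ, ?_, rfl⟩, meas_kmp φ hφ h μ ξ, ?_⟩
  · intro k s _
    simp only [hξ]
    split_ifs with hs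
    · rw [abs_div]
      have h1 := hd (fun j => (s j : ℕ)) hs (center K k) (blockCl_cube hK k _ (center_mem hK k))
      have h2 : (1 : ℝ) ≤ |∏ j, ((s j : ℕ).factorial : ℝ)| := by
        rw [abs_of_nonneg (by positivity)]
        have : 1 ≤ ∏ j, (s j : ℕ).factorial := Nat.succ_le_of_lt (Finset.prod_pos fun j _ => Nat.factorial_pos _)
        exact_mod_cast this
      exact (div_le_self (abs_nonneg _) h2).trans (h1.trans (by linarith))
    · simpa using hB.le
  · intro x hx
    have hw := weight_sum hp φ hφ hK hh1 hv hφpos x hx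
    have e1 : kmpFun φ K m h μ ξ x - f₀ x
        = ∑ k, weight φ K h μ k x * (TP r f₀ (center K k) x - f₀ x) := by
      simp only [mul_sub, Finset.sum_sub_distrib]
      rw [← Finset.sum_mul, hw, one_mul]
      congr 1
      unfold kmpFun
      refine Finset.sum_congr rfl fun k _ => ?_
      unfold TP
      rw [← sum_mIdx hrm, Finset.mul_sum]
      refine Finset.sum_congr rfl fun s _ => ?_
      simp only [hξ, mono]
      split_ifs
      · ring
      · simp
    rw [e1]
    calc |∑ k, weight φ K h μ k x * (TP r f₀ (center K k) x - f₀ x)|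
        ≤ ∑ k, |weight φ K h μ k x * (TP r f₀ (center K k) x - f₀ x)| := Finset.abs_sum_le_sum_abs _ _
      _ ≤ ∑ k, weight φ K h μ k x * (p ^ r * L * h ^ α) := by
        refine Finset.sum_le_sum fun k _ => ?_
        have hw0 := weight_nonneg φ hφ K h μ k x
        rw [abs_mul, abs_of_nonneg hw0]
        by_cases h0 : φ (fun j => (x j - μ k j) / h) = 0
        · simp [weight, h0]
        refine mul_le_mul_of_nonneg_left ?_ hw0
        have hn : ‖fun j => (x j - μ k j) / h‖ ≤ 1 := by
          by_contra hc
          push Not at hc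
          exact h0 (hφ.2.2.1 _ hc)
        have hn2 : ‖x - center K k‖ ≤ h := by
          rw [pi_norm_le_iff_of_nonneg hhp.le]
          intro j
          have := (norm_le_pi_norm _ j).trans hn
          rw [norm_div, Real.norm_of_nonneg hhp.le, div_le_one hhp] at this
          exact this
        rw [abs_sub_comm]
        refine (htay _ (blockCl_cube hK k _ (center_mem hK k)) x hx).trans ?_
        have e2 : (r : ℝ) + β = α := by rw [hβ]; ring
        rw [e2]
        gcongr
      _ = p ^ r * L * h ^ α := by rw [← Finset.sum_mul, hw, one_mul]
      _ = p ^ r * L * hmin ^ α * (K : ℝ) ^ (-α) := by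
        rw [hh, div_rpow (by linarith) hK'.le, rpow_neg hK'.le]; ring
      _ ≤ _ := by
        gcongr
        linarith

end

section
/-- radial profile -/
def Psi {p : ℕ} (φ : (Fin p → ℝ) → ℝ) (u : ℝ) : ℝ := φ (fun _ => max u 0)

/-- oscillation of the radial profile -/
def Dl {p : ℕ} (φ : (Fin p → ℝ) → ℝ) (η u : ℝ) : ℝ := Psi φ (u - η) - Psi φ (u + η)

lemma Psi_cont {p : ℕ} (φ : (Fin p → ℝ) → ℝ) (hφ : IsBoxedKernel φ) : Continuous (Psi φ) := by
  unfold Psi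
  exact hφ.1.comp (by fun_prop)

lemma Psi_anti {p : ℕ} (hp : 0 < p) (φ : (Fin p → ℝ) → ℝ) (hφ : IsBoxedKernel φ) :
    Antitone (Psi φ) := by
  intro a b hab
  apply hφ.2.2.2
  rw [norm_const' hp, norm_const' hp, abs_of_nonneg (le_max_right _ _),
    abs_of_nonneg (le_max_right _ _)]
  exact max_le_max_right 0 hab

lemma phi_eq {p : ℕ} (hp : 0 < p) (φ : (Fin p → ℝ) → ℝ) (hφ : IsBoxedKernel φ) (u : Fin p → ℝ) :
    φ u = Psi φ ‖u‖ := by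
  have h : ‖(fun _ : Fin p => max ‖u‖ 0)‖ = ‖u‖ := by
    rw [norm_const' hp, abs_of_nonneg (le_max_right _ _), max_eq_left (norm_nonneg _)]
  exact le_antisymm (hφ.2.2.2 _ _ h.le) (hφ.2.2.2 _ _ h.ge)

lemma Dl_cont {p : ℕ} (φ : (Fin p → ℝ) → ℝ) (hφ : IsBoxedKernel φ) (η : ℝ) :
    Continuous (Dl φ η) := by
  have := Psi_cont φ hφ
  unfold Dl
  fun_prop

lemma Dl_nonneg {p : ℕ} (hp : 0 < p) (φ : (Fin p → ℝ) → ℝ) (hφ : IsBoxedKernel φ) {η : ℝ}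
    (hη : 0 ≤ η) (u : ℝ) : 0 ≤ Dl φ η u :=
  sub_nonneg.2 (Psi_anti hp φ hφ (by linarith))

lemma Dl_le_one {p : ℕ} (φ : (Fin p → ℝ) → ℝ) (hφ : IsBoxedKernel φ) (η : ℝ)
    (u : ℝ) : Dl φ η u ≤ 1 := by
  have h1 := (hφ.2.1 (fun _ => max (u - η) 0)).2
  have h2 := (hφ.2.1 (fun _ => max (u + η) 0)).1
  unfold Dl Psi
  linarith

lemma ker_close {p : ℕ} (hp : 0 < p) (φ : (Fin p → ℝ) → ℝ) (hφ : IsBoxedKernel φ) {η : ℝ}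
    (hη : 0 ≤ η) (u u' : Fin p → ℝ) (h : ∀ j, |u j - u' j| ≤ η) :
    |φ u - φ u'| ≤ ∑ j, (Dl φ η (u' j) + Dl φ η (-(u' j))) := by
  have h1 : |‖u‖ - ‖u'‖| ≤ η := (abs_norm_sub_norm_le u u').trans
    ((pi_norm_le_iff_of_nonneg hη).2 h)
  have h2 : |φ u - φ u'| ≤ Dl φ η ‖u'‖ := by
    rw [phi_eq hp φ hφ u, phi_eq hp φ hφ u']
    rw [abs_le] at h1
    have a1 := Psi_anti hp φ hφ (show ‖u'‖ - η ≤ ‖u‖ by linarith)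
    have a2 := Psi_anti hp φ hφ (show ‖u‖ ≤ ‖u'‖ + η by linarith)
    have a3 := Psi_anti hp φ hφ (show ‖u'‖ - η ≤ ‖u'‖ by linarith)
    have a4 := Psi_anti hp φ hφ (show ‖u'‖ ≤ ‖u'‖ + η by linarith)
    unfold Dl
    rw [abs_le]; constructor <;> linarith
  have hne : Nonempty (Fin p) := ⟨⟨0, hp⟩⟩
  obtain ⟨j, hj⟩ : ∃ j, ‖u'‖ = |u' j| := by
    obtain ⟨j, -, hj⟩ := Finset.exists_max_image (Finset.univ : Finset (Fin p)) (fun j => |u' j|)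
      Finset.univ_nonempty
    refine ⟨j, le_antisymm ?_ (norm_le_pi_norm u' j)⟩
    exact (pi_norm_le_iff_of_nonneg (abs_nonneg _)).2 fun i => hj i (Finset.mem_univ i)
  refine h2.trans (le_trans ?_ (Finset.single_le_sum
    (f := fun j => Dl φ η (u' j) + Dl φ η (-(u' j)))
    (fun i _ => add_nonneg (Dl_nonneg hp φ hφ hη _) (Dl_nonneg hp φ hφ hη _)) (Finset.mem_univ j)))
  rw [hj]
  have b1 := Dl_nonneg hp φ hφ hη (u' j)
  have b2 := Dl_nonneg hp φ hφ hη (-(u' j))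
  rcases abs_choice (u' j) with h | h <;> rw [h] <;> linarith

lemma int_Dl {p : ℕ} (φ : (Fin p → ℝ) → ℝ) (hφ : IsBoxedKernel φ) (η c d : ℝ) (hc : c ≠ 0) :
    ∫ t in (0:ℝ)..1, Dl φ η (c * t + d) ≤ 4 * |η / c| := by
  set H : ℝ → ℝ := fun t => Psi φ (c * t + d)
  have hH : Continuous H := by
    have := Psi_cont φ hφ
    fun_prop
  have hb : ∀ t, ‖H t‖ ≤ 1 := fun t => by
    have := hφ.2.1 (fun _ => max (c * t + d) 0)
    rw [Real.norm_eq_abs, abs_le]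
    constructor <;> simp only [H, Psi] <;> linarith [this.1, this.2]
  set a := η / c
  have e1 : ∀ t, Dl φ η (c * t + d) = H (t - a) - H (t + a) := fun t => by
    simp only [Dl, H, a]
    congr 2 <;> field_simp <;> ring
  have hi : ∀ x y, IntervalIntegrable H volume x y := fun x y => hH.intervalIntegrable _ _
  calc ∫ t in (0:ℝ)..1, Dl φ η (c * t + d) = ∫ t in (0:ℝ)..1, (H (t - a) - H (t + a)) := by
        simp_rw [e1]
    _ = (∫ t in (0 - a)..(1 - a), H t) - ∫ t in (0 + a)..(1 + a), H t := by
        rw [intervalIntegral.integral_sub ((by fun_prop : Continuous fun t => H (t - a)).intervalIntegrable _ _)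
          ((by fun_prop : Continuous fun t => H (t + a)).intervalIntegrable _ _),
          intervalIntegral.integral_comp_sub_right (fun t => H t) a,
          intervalIntegral.integral_comp_add_right (fun t => H t) a]
    _ = (∫ t in (0 - a)..(0 + a), H t) - ∫ t in (1 - a)..(1 + a), H t :=
        intervalIntegral.integral_interval_sub_interval_comm (hi _ _) (hi _ _) (hi _ _)
    _ ≤ 1 * |(0 + a) - (0 - a)| + 1 * |(1 + a) - (1 - a)| := by
        have x1 := intervalIntegral.norm_integral_le_of_norm_le_const (a := 0 - a) (b := 0 + a)
          (f := H) (C := 1) (fun t _ => hb t)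
        have x2 := intervalIntegral.norm_integral_le_of_norm_le_const (a := 1 - a) (b := 1 + a)
          (f := H) (C := 1) (fun t _ => hb t)
        rw [Real.norm_eq_abs, abs_le] at x1 x2
        linarith [x1.1, x1.2, x2.1, x2.2]
    _ = 4 * |a| := by
        have : (0 + a) - (0 - a) = 2 * a := by ring
        rw [this, show (1 + a) - (1 - a) = 2 * a by ring, abs_mul]
        norm_num; ring

lemma int_coord {p : ℕ} (j : Fin p) (g : ℝ → ℝ) (hg : Continuous g) :
    ∫ x in cube p, g (x j) = ∫ t in (0:ℝ)..1, g t := by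
  have hprob : IsProbabilityMeasure (volume.restrict (Set.Icc (0:ℝ) 1)) :=
    ⟨by simp⟩
  have h1 : (volume : Measure (Fin p → ℝ)).restrict (cube p)
      = Measure.pi (fun _ => volume.restrict (Set.Icc (0:ℝ) 1)) := by
    rw [cube_eq, volume_pi, Measure.restrict_pi_pi]
  rw [h1, intervalIntegral.integral_of_le zero_le_one, ← integral_Icc_eq_integral_Ioc]
  have h2 := (measurePreserving_eval (fun _ : Fin p => volume.restrict (Set.Icc (0:ℝ) 1)) j)
  have h3 := integral_map (μ := Measure.pi (fun _ : Fin p => volume.restrict (Set.Icc (0:ℝ) 1)))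
    h2.measurable.aemeasurable (f := g) hg.aestronglyMeasurable
  rw [h2.map_eq] at h3
  exact h3.symm

lemma int_Dl_nu {p : ℕ} (hp : 0 < p) (φ : (Fin p → ℝ) → ℝ) (hφ : IsBoxedKernel φ) (η c d : ℝ)
    (hη : 0 ≤ η) (hc : c ≠ 0) (px : (Fin p → ℝ) → ℝ) (hpxm : Measurable px) (C : ℝ)
    (hpx0 : ∀ x ∈ cube p, 0 ≤ px x) (hpxC : ∀ x ∈ cube p, px x ≤ C) (j : Fin p) :
    ∫ x, Dl φ η (c * x j + d) ∂(nuX p px) ≤ C * (4 * |η / c|) := by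
  have hcont : Continuous fun t => Dl φ η (c * t + d) := by
    have := Dl_cont φ hφ η
    fun_prop
  have hC : 0 ≤ C := (hpx0 0 (fun j => by simp)).trans (hpxC 0 (fun j => by simp))
  have : IsFiniteMeasure (volume.restrict (cube p)) := ⟨by simp [vol_cube]⟩
  rw [integral_nuX px hpxm hpx0]
  have hb : ∀ x ∈ cube p, Dl φ η (c * x j + d) * px x ≤ C * Dl φ η (c * x j + d) := fun x hx => by
    have := Dl_nonneg hp φ hφ hη (c * x j + d)
    nlinarith [hpxC x hx]
  have hi : Integrable (fun x : Fin p → ℝ => Dl φ η (c * x j + d)) (volume.restrict (cube p)) := by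
    refine Integrable.of_bound (C := 1) ?_ (Eventually.of_forall fun x => ?_)
    · exact (hcont.comp (continuous_apply j)).aestronglyMeasurable
    · rw [Real.norm_eq_abs, abs_of_nonneg (Dl_nonneg hp φ hφ hη _)]
      exact Dl_le_one φ hφ η _
  calc _ ≤ ∫ x in cube p, C * Dl φ η (c * x j + d) := by
        refine integral_mono_of_nonneg ?_ (hi.const_mul C) ?_
        · filter_upwards [ae_restrict_mem (meas_cube p)] with x hx
          exact mul_nonneg (Dl_nonneg hp φ hφ hη _) (hpx0 x hx)
        · filter_upwards [ae_restrict_mem (meas_cube p)] with x hx using hb x hx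
    _ = C * ∫ t in (0:ℝ)..1, Dl φ η (c * t + d) := by
        rw [integral_const_mul, int_coord j (fun t => Dl φ η (c * t + d)) hcont]
    _ ≤ _ := by
        gcongr
        exact int_Dl φ hφ η c d hc

/-- envelope for kernel perturbations -/
def Env {p : ℕ} (φ : (Fin p → ℝ) → ℝ) (η h : ℝ) (μ : Fin p → ℝ) (x : Fin p → ℝ) : ℝ :=
  ∑ j, (Dl φ η ((x j - μ j) / h) + Dl φ η (-((x j - μ j) / h)))

lemma Env_nonneg {p : ℕ} (hp : 0 < p) (φ : (Fin p → ℝ) → ℝ) (hφ : IsBoxedKernel φ) {η : ℝ}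
    (hη : 0 ≤ η) (h : ℝ) (μ x : Fin p → ℝ) : 0 ≤ Env φ η h μ x :=
  Finset.sum_nonneg fun _ _ => add_nonneg (Dl_nonneg hp φ hφ hη _) (Dl_nonneg hp φ hφ hη _)

lemma Env_cont {p : ℕ} (φ : (Fin p → ℝ) → ℝ) (hφ : IsBoxedKernel φ) (η : ℝ)
    (h : ℝ) (μ : Fin p → ℝ) : Continuous (Env φ η h μ) := by
  have := Dl_cont φ hφ η
  unfold Env
  fun_prop

lemma Env_int {p : ℕ} (hp : 0 < p) (φ : (Fin p → ℝ) → ℝ) (hφ : IsBoxedKernel φ) {η : ℝ}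
    (hη : 0 ≤ η) (h : ℝ) (hh : 0 < h) (μ : Fin p → ℝ)
    (px : (Fin p → ℝ) → ℝ) (hpxm : Measurable px) (C : ℝ)
    (hpx0 : ∀ x ∈ cube p, 0 ≤ px x) (hpxC : ∀ x ∈ cube p, px x ≤ C)
    [IsProbabilityMeasure (nuX p px)] :
    Integrable (Env φ η h μ) (nuX p px) ∧
      ∫ x, Env φ η h μ x ∂(nuX p px) ≤ p * (8 * C * (η * h)) := by
  have hD : ∀ (c d : ℝ) (j : Fin p), Integrable (fun x : Fin p → ℝ => Dl φ η (c * x j + d)) (nuX p px) := by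
    intro c d j
    refine Integrable.of_bound (C := 1) ?_ (Eventually.of_forall fun x => ?_)
    · have := Dl_cont φ hφ η
      exact (by fun_prop : Continuous fun x : Fin p → ℝ => Dl φ η (c * x j + d)).aestronglyMeasurable
    · rw [Real.norm_eq_abs, abs_of_nonneg (Dl_nonneg hp φ hφ hη _)]
      exact Dl_le_one φ hφ η _
  have e : Env φ η h μ = fun x => ∑ j, (Dl φ η ((1/h) * x j + (-(μ j)/h)) + Dl φ η ((-(1/h)) * x j + μ j / h)) := by
    funext x
    unfold Env
    refine Finset.sum_congr rfl fun j _ => ?_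
    congr 2 <;> ring
  rw [e]
  refine ⟨integrable_finsetSum _ fun j _ => (hD _ _ j).add (hD _ _ j), ?_⟩
  have hsum : ∀ j : Fin p, Integrable (fun x : Fin p → ℝ => Dl φ η ((1/h) * x j + (-(μ j)/h)) + Dl φ η ((-(1/h)) * x j + μ j / h)) (nuX p px) :=
    fun j => (hD _ _ j).add (hD _ _ j)
  simp only []
  rw [integral_finsetSum _ fun j _ => hsum j]
  calc _ ≤ ∑ j : Fin p, (8 * C * (η * h)) := by
        refine Finset.sum_le_sum fun j _ => ?_
        rw [integral_add (hD _ _ j) (hD _ _ j)]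
        have h1 := int_Dl_nu hp φ hφ η (1/h) (-(μ j)/h) hη (by positivity) px hpxm C hpx0 hpxC j
        have h2 := int_Dl_nu hp φ hφ η (-(1/h)) (μ j/h) hη (neg_ne_zero.2 (by positivity)) px hpxm C hpx0 hpxC j
        have h3 : |η / (1/h)| = η * h := by
          rw [abs_of_nonneg (by positivity)]; field_simp
        have h4 : |η / (-(1/h))| = η * h := by
          rw [div_neg, abs_neg, h3]
        rw [h3] at h1; rw [h4] at h2
        linarith
    _ = _ := by simp

lemma ratio_close (a a' S S' : ℝ) (hS : 0 < S) (hS' : 0 < S') (ha' : 0 ≤ a') :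
    |a / S - a' / S'| ≤ |a - a'| / S + a' / S' * (|S - S'| / S) := by
  have : a / S - a' / S' = (a - a') / S - a' / S' * ((S - S') / S) := by
    field_simp; ring
  rw [this]
  refine (abs_sub _ _).trans ?_
  rw [abs_mul, abs_of_nonneg (show 0 ≤ a' / S' by positivity), abs_div, abs_div, abs_of_pos hS]

lemma kmp_close {p m : ℕ} (hp : 0 < p) (φ : (Fin p → ℝ) → ℝ) (hφ : IsBoxedKernel φ) {hmin hmax : ℝ}
    {K : ℕ} {h h' : ℝ} {μ μ' : (Fin p → Fin K) → Fin p → ℝ} (hK : 0 < K)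
    (hh1 : 1 < hmin) (hv : valid hmin hmax K h μ) (hv' : valid hmin hmax K h' μ')
    (hφpos : ∀ u : Fin p → ℝ, ‖u‖ < 1 → 0 < φ u)
    (ξ ξ' : (Fin p → Fin K) → (Fin p → Fin (m + 1)) → ℝ) (B : ℝ) (hB : 0 < B)
    (hξ' : ∀ k, ∀ s ∈ mIdx p m, |ξ' k s| ≤ B) (δ : ℝ) (hδ : 0 < δ)
    (c1 : |1/h - 1/h'| ≤ δ) (c2 : ∀ k j, |μ k j - μ' k j| ≤ δ) (c3 : ∀ k, ∀ s ∈ mIdx p m, |ξ k s - ξ' k s| ≤ δ)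
    (x : Fin p → ℝ) (hx : x ∈ cube p) :
    |kmpFun φ K m h μ ξ x - kmpFun φ K m h' μ' ξ' x| ≤
      (mIdx p m).card * (δ + B * (2 / cz φ hmin * ∑ l, Env φ (δ * (K + 1)) h' (μ' l) x)) := by
  have hK' : (0 : ℝ) < K := by exact_mod_cast hK
  have hh := h_pos hK hh1 hv
  have hh' := h_pos hK hh1 hv'
  have hcz := cz_pos hp φ hmin hh1 hφpos
  set η := δ * ((K : ℝ) + 1)
  have hη : 0 ≤ η := by positivity
  have hinv : 1 / h' ≤ K := by
    rw [div_le_iff₀ hh']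
    linarith [hv'.1.1]
  set a := fun l => φ (fun j => (x j - μ l j) / h)
  set a' := fun l => φ (fun j => (x j - μ' l j) / h')
  have hcl : ∀ l, |a l - a' l| ≤ Env φ η h' (μ' l) x := by
    intro l
    refine ker_close hp φ hφ hη _ _ fun j => ?_
    have e : (x j - μ l j) / h - (x j - μ' l j) / h'
      = (x j - μ l j) * (1/h - 1/h') - (μ l j - μ' l j) * (1/h') := by ring
    rw [e]
    refine (abs_sub _ _).trans ?_
    rw [abs_mul, abs_mul, abs_of_pos (show 0 < 1/h' by positivity)]
    have h1 := hx j
    have h2 := blockCl_cube hK l _ (hv.2 l) j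
    have h3 : |x j - μ l j| ≤ 1 := by
      rw [abs_le]; constructor <;> linarith [h1.1, h1.2, h2.1, h2.2]
    calc _ ≤ 1 * δ + δ * K := by
          gcongr
          exact c2 l j
      _ = η := by ring
  have hS := S_ge hp φ hφ hK hh1 hv x hx
  have hS' := S_ge hp φ hφ hK hh1 hv' x hx
  change cz φ hmin ≤ ∑ l, a l at hS
  change cz φ hmin ≤ ∑ l, a' l at hS'
  set S := ∑ l, a l
  set S' := ∑ l, a' l
  have hSS : |S - S'| ≤ ∑ l, Env φ η h' (μ' l) x := by
    rw [← Finset.sum_sub_distrib]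
    exact (Finset.abs_sum_le_sum_abs _ _).trans (Finset.sum_le_sum fun l _ => hcl l)
  have hE0 : 0 ≤ ∑ l, Env φ η h' (μ' l) x := Finset.sum_nonneg fun l _ => Env_nonneg hp φ hφ hη _ _ _
  have hw : ∑ k, |weight φ K h μ k x - weight φ K h' μ' k x| ≤ 2 / cz φ hmin * ∑ l, Env φ η h' (μ' l) x := by
    calc _ ≤ ∑ k, (|a k - a' k| / S + weight φ K h' μ' k x * (|S - S'| / S)) :=
          Finset.sum_le_sum fun k _ => ratio_close (a k) (a' k) S S' (by linarith) (by linarith) (hφ.2.1 _).1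
      _ = (∑ k, |a k - a' k|) / S + |S - S'| / S := by
          rw [Finset.sum_add_distrib, ← Finset.sum_mul, weight_sum hp φ hφ hK hh1 hv' hφpos x hx,
            ← Finset.sum_div, one_mul]
      _ ≤ (∑ l, Env φ η h' (μ' l) x) / cz φ hmin + (∑ l, Env φ η h' (μ' l) x) / cz φ hmin := by
          gcongr with k
          exact hcl k
      _ = _ := by ring
  have key : kmpFun φ K m h μ ξ x - kmpFun φ K m h' μ' ξ' x = ∑ k, ∑ s ∈ mIdx p m,
      ((ξ k s - ξ' k s) * weight φ K h μ k x + ξ' k s * (weight φ K h μ k x - weight φ K h' μ' k x)) * mono K m k s x := by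
    unfold kmpFun
    simp only [← Finset.sum_sub_distrib]
    refine Finset.sum_congr rfl fun k _ => Finset.sum_congr rfl fun s _ => ?_
    ring
  rw [key]
  calc _ ≤ ∑ k, ∑ s ∈ mIdx p m, (δ * weight φ K h μ k x + B * |weight φ K h μ k x - weight φ K h' μ' k x|) := by
        refine (Finset.abs_sum_le_sum_abs _ _).trans (Finset.sum_le_sum fun k _ =>
          (Finset.abs_sum_le_sum_abs _ _).trans (Finset.sum_le_sum fun s hs => ?_))
        have hw0 := weight_nonneg φ hφ K h μ k x
        rw [abs_mul]
        calc _ ≤ |(ξ k s - ξ' k s) * weight φ K h μ k x + ξ' k s * (weight φ K h μ k x - weight φ K h' μ' k x)| * 1 := by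
              gcongr
              exact mono_le hK k s x hx
          _ ≤ _ := by
              rw [mul_one]
              refine (abs_add_le _ _).trans ?_
              rw [abs_mul, abs_mul, abs_of_nonneg hw0]
              gcongr
              · exact c3 k s hs
              · exact hξ' k s hs
    _ = (mIdx p m).card * (δ + B * ∑ k, |weight φ K h μ k x - weight φ K h' μ' k x|) := by
        simp only [Finset.sum_const, nsmul_eq_mul]
        rw [← Finset.mul_sum, Finset.sum_add_distrib, ← Finset.mul_sum, ← Finset.mul_sum,
          weight_sum hp φ hφ hK hh1 hv hφpos x hx, mul_one]
    _ ≤ _ := by gcongr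

lemma cell {p m : ℕ} (hp : 0 < p) (φ : (Fin p → ℝ) → ℝ) (hφ : IsBoxedKernel φ) {hmin hmax : ℝ}
    (hh1 : 1 < hmin) (hh2 : hmin < hmax)
    (hφpos : ∀ u : Fin p → ℝ, ‖u‖ < 1 → 0 < φ u) (B : ℝ) (hB : 0 < B)
    (px : (Fin p → ℝ) → ℝ) (hpxm : Measurable px) (C : ℝ)
    (hpx0 : ∀ x ∈ cube p, 0 ≤ px x) (hpxC : ∀ x ∈ cube p, px x ≤ C)
    [IsProbabilityMeasure (nuX p px)] :
    ∃ C4 : ℝ, 0 ≤ C4 ∧ ∀ K : ℕ, 0 < K → ∀ δ : ℝ, 0 < δ → ∀ (h' : ℝ) (μ' : (Fin p → Fin K) → Fin p → ℝ)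
      (ξ' : (Fin p → Fin K) → (Fin p → Fin (m + 1)) → ℝ), valid hmin hmax K h' μ' →
      (∀ k, ∀ s ∈ mIdx p m, |ξ' k s| ≤ B) →
      ∃ D : (Fin p → ℝ) → ℝ, Measurable D ∧ (∀ x, 0 ≤ D x ∧ D x ≤ 2 * ((mIdx p m).card * B)) ∧
        ∫ x, D x ∂(nuX p px) ≤ C4 * (δ * (K : ℝ) ^ (p + 1)) ∧
        ∀ (h : ℝ) (μ : (Fin p → Fin K) → Fin p → ℝ)
          (ξ : (Fin p → Fin K) → (Fin p → Fin (m + 1)) → ℝ), valid hmin hmax K h μ →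
          (∀ k, ∀ s ∈ mIdx p m, |ξ k s| ≤ B) →
          |1/h - 1/h'| ≤ δ → (∀ k j, |μ k j - μ' k j| ≤ δ) → (∀ k, ∀ s ∈ mIdx p m, |ξ k s - ξ' k s| ≤ δ) →
          ∀ x ∈ cube p, |kmpFun φ K m h μ ξ x - kmpFun φ K m h' μ' ξ' x| ≤ D x := by
  have hcz := cz_pos hp φ hmin hh1 hφpos
  have hC : 0 ≤ C := (hpx0 0 (fun j => by simp)).trans (hpxC 0 (fun j => by simp))
  set J : ℝ := ((mIdx p m).card : ℝ)
  have hJ : 0 ≤ J := by positivity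
  have hhm : 0 < hmax := by linarith
  refine ⟨J * (1 + B * (2 / cz φ hmin * (p * (8 * C * (2 * hmax))))), by positivity, ?_⟩
  intro K hK δ hδ h' μ' ξ' hv' hξ'
  have hK1 : (1 : ℝ) ≤ K := by exact_mod_cast hK
  have hh' := h_pos hK hh1 hv'
  have hη : 0 ≤ δ * ((K : ℝ) + 1) := by positivity
  set E : (Fin p → ℝ) → ℝ := fun x => J * (δ + B * (2 / cz φ hmin * ∑ l, Env φ (δ * (K + 1)) h' (μ' l) x))
  have hE0 : ∀ x, 0 ≤ E x := fun x => by
    have : 0 ≤ ∑ l, Env φ (δ * (K + 1)) h' (μ' l) x := Finset.sum_nonneg fun l _ => Env_nonneg hp φ hφ hη _ _ _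
    positivity
  have hEc : Continuous E := by
    have := fun l => Env_cont φ hφ (δ * (K + 1)) h' (μ' l)
    fun_prop
  refine ⟨fun x => min (2 * (J * B)) (E x), ?_, ?_, ?_, ?_⟩
  · exact measurable_const.min hEc.measurable
  · intro x
    exact ⟨le_min (by positivity) (hE0 x), min_le_left _ _⟩
  · have hEi := fun l => Env_int hp φ hφ hη h' hh' (μ' l) px hpxm C hpx0 hpxC
    have hSi : Integrable (fun x => ∑ l, Env φ (δ * (K + 1)) h' (μ' l) x) (nuX p px) :=
      integrable_finsetSum _ fun l _ => (hEi l).1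
    have hEint : Integrable E (nuX p px) :=
      ((integrable_const _).add ((hSi.const_mul _).const_mul _)).const_mul _
    calc _ ≤ ∫ x, E x ∂(nuX p px) := by
          refine integral_mono_of_nonneg (Eventually.of_forall fun x => ?_) hEint
            (Eventually.of_forall fun x => min_le_right _ _)
          exact le_min (by positivity) (hE0 x)
      _ = J * (δ + B * (2 / cz φ hmin * ∑ l, ∫ x, Env φ (δ * (K + 1)) h' (μ' l) x ∂(nuX p px))) := by
          simp only [E]
          rw [integral_const_mul, integral_add (integrable_const _) ((hSi.const_mul _).const_mul _),
            integral_const_mul, integral_const_mul, integral_finsetSum _ fun l _ => (hEi l).1]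
          simp
      _ ≤ J * (δ + B * (2 / cz φ hmin * ∑ l : Fin p → Fin K, p * (8 * C * ((δ * (2 * K)) * hmax)))) := by
          gcongr with l
          refine (hEi l).2.trans ?_
          have : h' ≤ hmax := by nlinarith [hv'.1.2]
          gcongr
          linarith
      _ ≤ _ := by
          simp only [Finset.sum_const, Finset.card_univ, Fintype.card_pi, Fintype.card_fin,
            Finset.prod_const, nsmul_eq_mul, Nat.cast_pow]
          have hKp : (1:ℝ) ≤ (K:ℝ) ^ (p+1) := one_le_pow₀ hK1
          have e : J * (δ + B * (2 / cz φ hmin * ((K:ℝ) ^ p * (p * (8 * C * (δ * (2 * K) * hmax))))))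
            = J * (δ * 1 + B * (2 / cz φ hmin * (p * (8 * C * (2 * hmax)))) * (δ * (K:ℝ)^(p+1))) := by ring
          have e2 : J * (1 + B * (2 / cz φ hmin * (p * (8 * C * (2 * hmax))))) * (δ * (K:ℝ)^(p+1))
            = J * (δ * (K:ℝ)^(p+1) + B * (2 / cz φ hmin * (p * (8 * C * (2 * hmax)))) * (δ * (K:ℝ)^(p+1))) := by ring
          rw [e, e2]
          gcongr
  · intro h μ ξ hv hξ c1 c2 c3 x hx
    refine le_min ?_ (kmp_close hp φ hφ hK hh1 hv hv' hφpos ξ ξ' B hB hξ' δ hδ c1 c2 c3 x hx)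
    refine (abs_sub _ _).trans ?_
    have h1 := kmp_bound hp φ hφ hK hh1 hv hφpos ξ B hξ x hx
    have h2 := kmp_bound hp φ hφ hK hh1 hv' hφpos ξ' B hξ' x hx
    linarith

end

section
section
open ProbabilityTheory

lemma approx_prob {p : ℕ} (px f₀ fs : (Fin p → ℝ) → ℝ) (hpxm : Measurable px) (hf : Measurable f₀)
    (hfs : Measurable fs)
    (hpx0 : ∀ x ∈ cube p, 0 ≤ px x) (hpx1 : (∫ x in cube p, px x) = 1) (σ : ℝ) (hσ : 0 < σ)
    (v : ℝ≥0) (hv : (v : ℝ) = σ ^ 2) (lam : ℝ) (hl : 0 < lam) (hlv : 8 * lam * v = 1)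
    (ρ : ℝ) (hρ : ∀ x ∈ cube p, |fs x - f₀ x| ≤ ρ) (n : ℕ) (hn : 0 < n) (t : ℝ) :
    Measure.pi (fun _ : Fin n => trueMeas p px f₀ σ)
      {d | t ≤ ∑ i, (((d i).2 - fs (d i).1) ^ 2 - ((d i).2 - f₀ (d i).1) ^ 2)} ≤
      ENNReal.ofReal (exp (-lam * t + 2 * lam * n * ρ ^ 2)) := by
  have hn' : (0 : ℝ) < n := by exact_mod_cast hn
  have hP := prob_true px f₀ hpxm hf hpx0 hpx1 σ hσ
  have hN := prob_nuX px hpx0 hpx1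
  set W : (Fin p → ℝ) × ℝ → ℝ := fun e => lam * ((e.2 - fs e.1) ^ 2 - (e.2 - f₀ e.1) ^ 2) - lam * t / n
  have hW : Measurable W := by fun_prop
  have hR : ∫⁻ e, ENNReal.ofReal (exp (W e)) ∂(trueMeas p px f₀ σ)
      ≤ ENNReal.ofReal (exp (2 * lam * ρ ^ 2 - lam * t / n)) := by
    rw [lint_true px f₀ hpxm hf hpx0 σ hσ v hv _ (by fun_prop)]
    calc _ ≤ ∫⁻ x, ENNReal.ofReal (exp (2 * lam * ρ ^ 2 - lam * t / n)) ∂(nuX p px) := by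
          refine lintegral_mono_ae ?_
          filter_upwards [ae_nuX px] with x hx
          have e : ∀ z : ℝ, W (x, f₀ x + z) = (lam * (fs x - f₀ x) ^ 2 - lam * t / n)
            + (-2 * lam * (fs x - f₀ x)) * z := fun z => by simp only [W]; ring
          simp_rw [e]
          rw [lint_exp_gauss]
          refine ENNReal.ofReal_le_ofReal (exp_le_exp.2 ?_)
          have h1 : (fs x - f₀ x) ^ 2 ≤ ρ ^ 2 := by
            rw [← sq_abs]
            exact pow_le_pow_left₀ (abs_nonneg _) (hρ x hx) 2
          have h2 : (v:ℝ) * (-2 * lam * (fs x - f₀ x)) ^ 2 / 2 = (8 * lam * v) * (lam * (fs x - f₀ x) ^ 2 / 4) := by ring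
          rw [h2, hlv]
          nlinarith
      _ = _ := by simp
  refine le_trans (measure_mono ?_) ((chernoff _ n W hW _ (exp_nonneg _) hR).trans ?_)
  · intro d hd
    simp only [Set.mem_ofPred_eq] at hd ⊢
    simp only [W]
    rw [Finset.sum_sub_distrib, ← Finset.mul_sum]
    simp only [Finset.sum_const, Finset.card_univ, Fintype.card_fin, nsmul_eq_mul]
    have : (n:ℝ) * (lam * t / n) = lam * t := by field_simp
    rw [this]
    nlinarith
  · rw [← Real.exp_nat_mul]
    refine ENNReal.ofReal_le_ofReal (exp_le_exp.2 (le_of_eq ?_))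
    field_simp
    ring

/-- contraction constant -/
def cA (lam A : ℝ) : ℝ := lam / (1 + lam * A ^ 2)
/-- envelope constant -/
def cE (v : ℝ≥0) (lam A A' : ℝ) : ℝ := (1/A)*exp (2*lam*A*A')*(2*exp (v*(4*lam*A)^2/2))

lemma cell_prob {p : ℕ} (px f₀ fs D : (Fin p → ℝ) → ℝ) (hpxm : Measurable px) (hf : Measurable f₀)
    (hfs : Measurable fs) (hDm : Measurable D)
    (hpx0 : ∀ x ∈ cube p, 0 ≤ px x) (hpx1 : (∫ x in cube p, px x) = 1) (σ : ℝ) (hσ : 0 < σ)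
    (v : ℝ≥0) (hv : (v : ℝ) = σ ^ 2) (lam : ℝ) (hl : 0 < lam) (hlv : 8 * lam * v = 1)
    (A A' : ℝ) (hA : 0 < A) (hA' : 0 ≤ A') (hg : ∀ x ∈ cube p, |fs x - f₀ x| ≤ A)
    (hD : ∀ x, 0 ≤ D x ∧ D x ≤ A) (n : ℕ) (hn : 0 < n) (t : ℝ) :
    Measure.pi (fun _ : Fin n => trueMeas p px f₀ σ)
      {d | ∑ i, (((d i).2 - fs (d i).1) ^ 2 - ((d i).2 - f₀ (d i).1) ^ 2) ≤
        t + ∑ i, D (d i).1 * (A' + 2 * |(d i).2 - f₀ (d i).1|)} ≤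
      ENNReal.ofReal (exp (lam * t + n * (-(cA lam A / 2) * (∫ x, (fs x - f₀ x) ^ 2 ∂(nuX p px))
        + cE v lam A A' / 2 * ∫ x, D x ∂(nuX p px)))) := by
  have hn' : (0 : ℝ) < n := by exact_mod_cast hn
  have hP := prob_true px f₀ hpxm hf hpx0 hpx1 σ hσ
  have hN := prob_nuX px hpx0 hpx1
  set W : (Fin p → ℝ) × ℝ → ℝ := fun e => -lam * ((e.2 - fs e.1) ^ 2 - (e.2 - f₀ e.1) ^ 2)
    + lam * D e.1 * (A' + 2 * |e.2 - f₀ e.1|) + lam * t / n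
  have hW : Measurable W := by fun_prop
  set Ig := ∫ x, (fs x - f₀ x) ^ 2 ∂(nuX p px)
  set ID := ∫ x, D x ∂(nuX p px)
  have hcE : 0 ≤ cE v lam A A' := by unfold cE; positivity
  have hcA : 0 ≤ cA lam A := by unfold cA; positivity
  have hgi : Integrable (fun x => (fs x - f₀ x) ^ 2) (nuX p px) := by
    refine Integrable.of_bound (C := A ^ 2) (by fun_prop) ?_
    filter_upwards [ae_nuX px] with x hx
    rw [Real.norm_eq_abs, abs_of_nonneg (sq_nonneg _), ← sq_abs]
    exact pow_le_pow_left₀ (abs_nonneg _) (hg x hx) 2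
  have hDi : Integrable D (nuX p px) := by
    refine Integrable.of_bound (C := A) (by fun_prop) (Eventually.of_forall fun x => ?_)
    rw [Real.norm_eq_abs, abs_of_nonneg (hD x).1]
    exact (hD x).2
  have hR : ∫⁻ e, ENNReal.ofReal (exp (W e)) ∂(trueMeas p px f₀ σ)
      ≤ ENNReal.ofReal (exp (lam * t / n + (-(cA lam A / 2) * Ig + cE v lam A A' / 2 * ID))) := by
    rw [lint_true px f₀ hpxm hf hpx0 σ hσ v hv _ (by fun_prop)]
    have hint : Integrable (fun x => exp (lam * t / n) * (1 - cA lam A * (fs x - f₀ x)^2/2 + cE v lam A A' * D x / 2)) (nuX p px) :=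
      (((integrable_const _).sub ((hgi.const_mul _).div_const _)).add ((hDi.const_mul _).div_const _)).const_mul _
    calc _ ≤ ∫⁻ x, ENNReal.ofReal (exp (lam * t / n) * (1 - cA lam A * (fs x - f₀ x)^2/2 + cE v lam A A' * D x / 2)) ∂(nuX p px) := by
          refine lintegral_mono_ae ?_
          filter_upwards [ae_nuX px] with x hx
          refine le_trans (le_of_eq ?_) (inner_bound v lam A A' (fs x - f₀ x) (D x) (lam * t / n) hl hlv hA hA' (hg x hx) (hD x).1 (hD x).2)
          refine lintegral_congr fun z => ?_
          congr 2
          simp only [W]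
          rw [show f₀ x + z - f₀ x = z by ring]
          ring
      _ = ENNReal.ofReal (∫ x, exp (lam * t / n) * (1 - cA lam A * (fs x - f₀ x)^2/2 + cE v lam A A' * D x / 2) ∂(nuX p px)) := by
          rw [ofReal_integral_eq_lintegral_ofReal hint]
          filter_upwards [ae_nuX px] with x hx
          have h1 : (fs x - f₀ x) ^ 2 ≤ A ^ 2 := by
            rw [← sq_abs]
            exact pow_le_pow_left₀ (abs_nonneg _) (hg x hx) 2
          have h2 : cA lam A * (fs x - f₀ x)^2 ≤ 1 := by
            unfold cA
            rw [div_mul_eq_mul_div, div_le_one (by positivity)]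
            nlinarith
          have h3 := mul_nonneg hcE (hD x).1
          refine mul_nonneg (exp_nonneg _) ?_
          linarith
      _ ≤ _ := by
          refine ENNReal.ofReal_le_ofReal ?_
          have h1 : ∫ x, exp (lam * t / n) * (1 - cA lam A * (fs x - f₀ x)^2/2 + cE v lam A A' * D x / 2) ∂(nuX p px)
            = exp (lam * t / n) * (1 - cA lam A * Ig / 2 + cE v lam A A' * ID / 2) := by
            have q1 : Integrable (fun x => 1 - cA lam A * (fs x - f₀ x)^2/2) (nuX p px) :=
              (integrable_const _).sub ((hgi.const_mul _).div_const _)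
            rw [integral_const_mul, integral_add q1 ((hDi.const_mul _).div_const _),
              integral_sub (integrable_const _) ((hgi.const_mul _).div_const _), integral_div, integral_div, integral_const_mul, integral_const_mul]
            simp [Ig, ID]
          rw [h1, exp_add]
          gcongr
          have := add_one_le_exp (-(cA lam A / 2) * Ig + cE v lam A A' / 2 * ID)
          linarith
  refine le_trans (measure_mono ?_) ((chernoff _ n W hW _ (exp_nonneg _) hR).trans ?_)
  · intro d hd
    simp only [Set.mem_ofPred_eq] at hd ⊢
    have e : ∑ i, W (d i) = lam * (t + ∑ i, D (d i).1 * (A' + 2 * |(d i).2 - f₀ (d i).1|)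
        - ∑ i, (((d i).2 - fs (d i).1) ^ 2 - ((d i).2 - f₀ (d i).1) ^ 2)) := by
      simp only [W]
      rw [Finset.sum_add_distrib, Finset.sum_add_distrib, ← Finset.mul_sum]
      simp only [Finset.sum_const, Finset.card_univ, Fintype.card_fin, nsmul_eq_mul, mul_assoc lam]
      rw [← Finset.mul_sum]
      field_simp
      ring
    rw [e]
    exact mul_nonneg hl.le (by linarith)
  · rw [← Real.exp_nat_mul]
    refine ENNReal.ofReal_le_ofReal (exp_le_exp.2 (le_of_eq ?_))
    field_simp

end

end

section
lemma union_key {Ω Θ κ : Type*} [MeasurableSpace Ω] [Fintype κ] (P : Measure Ω) (G : Set Θ)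
    (key : Θ → κ) (E U : Θ → Set Ω) (b : ℝ≥0∞) (hU : ∀ θ ∈ G, P (U θ) ≤ b)
    (hE : ∀ θ ∈ G, ∀ θ' ∈ G, key θ = key θ' → E θ ⊆ U θ') :
    P (⋃ θ ∈ G, E θ) ≤ Fintype.card κ * b := by
  set V : κ → Set Ω := fun q => if h : ∃ θ', θ' ∈ G ∧ key θ' = q then U h.choose else ∅
  have hV : ∀ q, P (V q) ≤ b := by
    intro q
    simp only [V]
    split_ifs with h
    · exact hU _ h.choose_spec.1
    · simp
  calc P (⋃ θ ∈ G, E θ) ≤ P (⋃ q, V q) := by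
        refine measure_mono (Set.iUnion₂_subset fun θ hθ => ?_)
        refine Set.Subset.trans ?_ (Set.subset_iUnion V (key θ))
        have h : ∃ θ', θ' ∈ G ∧ key θ' = key θ := ⟨θ, hθ, rfl⟩
        simp only [V, dif_pos h]
        exact hE θ hθ _ h.choose_spec.1 h.choose_spec.2.symm
    _ ≤ ∑ q, P (V q) := measure_iUnion_fintype_le _ _
    _ ≤ ∑ q : κ, b := Finset.sum_le_sum fun q _ => hV q
    _ = _ := by simp

lemma floor_key (a b R δ : ℝ) (N : ℕ) (hδ : 0 < δ) (ha : |a| ≤ R) (hb : |b| ≤ R)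
    (hN : 2 * R / δ ≤ N) (h : min ⌊(a + R) / δ⌋₊ N = min ⌊(b + R) / δ⌋₊ N) : |a - b| ≤ δ := by
  rw [abs_le] at ha hb
  have e : ∀ x, x ≤ R → min ⌊(x + R) / δ⌋₊ N = ⌊(x + R) / δ⌋₊ := fun x hx => by
    refine min_eq_left ?_
    have : (x + R) / δ ≤ N := le_trans (by gcongr; linarith) hN
    exact Nat.floor_le_of_le this
  rw [e a ha.2, e b hb.2] at h
  have a1 := Nat.floor_le (show 0 ≤ (a + R) / δ from div_nonneg (by linarith) hδ.le)
  have a2 := Nat.lt_floor_add_one ((a + R) / δ)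
  have b1 := Nat.floor_le (show 0 ≤ (b + R) / δ from div_nonneg (by linarith) hδ.le)
  have b2 := Nat.lt_floor_add_one ((b + R) / δ)
  rw [h] at a1 a2
  rw [le_div_iff₀ hδ] at a1 b1
  rw [div_lt_iff₀ hδ] at a2 b2
  rw [abs_le]
  constructor <;> nlinarith

/-- parameter coordinates -/
abbrev Ix (p m K : ℕ) := Unit ⊕ (((Fin p → Fin K) × Fin p) ⊕ ((Fin p → Fin K) × (Fin p → Fin (m + 1))))

/-- parameters -/
abbrev Th (p m K : ℕ) := ℝ × ((Fin p → Fin K) → Fin p → ℝ) × ((Fin p → Fin K) → (Fin p → Fin (m + 1)) → ℝ)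

/-- coordinate vector -/
def vec {p m K : ℕ} (θ : Th p m K) : Ix p m K → ℝ
  | Sum.inl _ => 1 / θ.1
  | Sum.inr (Sum.inl q) => θ.2.1 q.1 q.2
  | Sum.inr (Sum.inr q) => if q.2 ∈ mIdx p m then θ.2.2 q.1 q.2 else 0

/-- the admissible parameters -/
def okP {p m K : ℕ} (hmin hmax B : ℝ) (θ : Th p m K) : Prop :=
  valid hmin hmax K θ.1 θ.2.1 ∧ ∀ k, ∀ s ∈ mIdx p m, |θ.2.2 k s| ≤ B

lemma vec_bound {p m K : ℕ} {hmin hmax B : ℝ} (hK : 0 < K) (hh1 : 1 < hmin) (hB : 0 < B)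
    (θ : Th p m K) (hθ : okP hmin hmax B θ) (i : Ix p m K) : |vec θ i| ≤ K + B := by
  have hK' : (1 : ℝ) ≤ K := by exact_mod_cast hK
  have hh := h_pos hK hh1 hθ.1
  rcases i with _ | q | q
  · simp only [vec]
    rw [abs_of_pos (by positivity)]
    have : 1 / θ.1 ≤ K := by
      rw [div_le_iff₀ hh]
      linarith [hθ.1.1.1]
    linarith
  · simp only [vec]
    have := blockCl_cube hK _ _ (hθ.1.2 q.1) q.2
    rw [abs_of_nonneg this.1]
    linarith [this.2]
  · simp only [vec]
    split_ifs with h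
    · linarith [hθ.2 q.1 q.2 h]
    · simp; positivity

lemma card_key (p m K N : ℕ) : Fintype.card (Ix p m K → Fin (N + 1))
    = (N + 1) ^ (1 + (K ^ p * p + K ^ p * (m + 1) ^ p)) := by
  rw [← Nat.card_eq_fintype_card, Nat.card_fun, Nat.card_sum, Nat.card_sum, Nat.card_prod,
    Nat.card_prod, Nat.card_fun, Nat.card_fun]
  simp only [Nat.card_eq_fintype_card, Fintype.card_fin, Fintype.card_unit]

lemma union_prob {p m : ℕ} (hp : 0 < p) (φ : (Fin p → ℝ) → ℝ) (hφ : IsBoxedKernel φ) {hmin hmax : ℝ}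
    (hh1 : 1 < hmin) (hh2 : hmin < hmax)
    (hφpos : ∀ u : Fin p → ℝ, ‖u‖ < 1 → 0 < φ u) (B : ℝ) (hB : 0 < B)
    (px f₀ : (Fin p → ℝ) → ℝ) (hpxm : Measurable px) (C : ℝ) (hf : Measurable f₀)
    (hf0 : ∀ x ∈ cube p, |f₀ x| ≤ B)
    (hpx0 : ∀ x ∈ cube p, 0 ≤ px x) (hpxC : ∀ x ∈ cube p, px x ≤ C)
    (hpx1 : (∫ x in cube p, px x) = 1) (σ : ℝ) (hσ : 0 < σ)
    (lam : ℝ) (hl : 0 < lam) (hlv : 8 * lam * σ ^ 2 = 1) :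
    ∃ c5 C5 : ℝ, 0 < c5 ∧ 0 ≤ C5 ∧ ∀ K : ℕ, 0 < K → ∀ δ : ℝ, 0 < δ → ∀ N : ℕ, 2 * (K + B) / δ ≤ N →
      ∀ n : ℕ, 0 < n → ∀ t r : ℝ,
      Measure.pi (fun _ : Fin n => trueMeas p px f₀ σ)
        {d | (∀ i, (d i).1 ∈ cube p) ∧ ∃ f, memSieve φ m B hmin hmax K f ∧
          r ≤ ∫ x in cube p, (f₀ x - f x) ^ 2 * px x ∧
          ∑ i, (((d i).2 - f (d i).1) ^ 2 - ((d i).2 - f₀ (d i).1) ^ 2) ≤ t} ≤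
      ((N + 1 : ℕ) : ℝ≥0∞) ^ (1 + (K ^ p * p + K ^ p * (m + 1) ^ p)) *
        ENNReal.ofReal (exp (lam * t + n * (-c5 * r + C5 * (δ * (K : ℝ) ^ (p + 1))))) := by
  have hN := prob_nuX px hpx0 hpx1
  obtain ⟨C4, hC4, hcell⟩ := cell (m := m) hp φ hφ hh1 hh2 hφpos B hB px hpxm C hpx0 hpxC
  set J : ℝ := ((mIdx p m).card : ℝ)
  have hJ : 0 ≤ J := by positivity
  set v : ℝ≥0 := (σ ^ 2).toNNReal
  have hv : (v : ℝ) = σ ^ 2 := Real.coe_toNNReal _ (sq_nonneg σ)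
  set A := 2 * (J * B) + B
  set A' := 2 * (J * B) + 2 * B
  have hA : 0 < A := by positivity
  have hA' : 0 ≤ A' := by positivity
  refine ⟨cA lam A / 2, cE v lam A A' / 2 * C4, by unfold cA; positivity,
    by unfold cE; positivity, ?_⟩
  intro K hK δ hδ N hNN n hn t r
  set F : Th p m K → (Fin p → ℝ) → ℝ := fun θ => kmpFun φ K m θ.1 θ.2.1 θ.2.2
  have hFb : ∀ θ, okP hmin hmax B θ → ∀ x ∈ cube p, |F θ x| ≤ J * B := fun θ hθ x hx =>
    kmp_bound hp φ hφ hK hh1 hθ.1 hφpos θ.2.2 B hθ.2 x hx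
  have hex : ∀ θ : Th p m K, ∃ D : (Fin p → ℝ) → ℝ, okP hmin hmax B θ → Measurable D ∧ (∀ x, 0 ≤ D x ∧ D x ≤ 2 * (J * B)) ∧
        ∫ x, D x ∂(nuX p px) ≤ C4 * (δ * (K : ℝ) ^ (p + 1)) ∧
        ∀ (h : ℝ) (μ : (Fin p → Fin K) → Fin p → ℝ)
          (ξ : (Fin p → Fin K) → (Fin p → Fin (m + 1)) → ℝ), valid hmin hmax K h μ →
          (∀ k, ∀ s ∈ mIdx p m, |ξ k s| ≤ B) →
          |1/h - 1/θ.1| ≤ δ → (∀ k j, |μ k j - θ.2.1 k j| ≤ δ) → (∀ k, ∀ s ∈ mIdx p m, |ξ k s - θ.2.2 k s| ≤ δ) →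
          ∀ x ∈ cube p, |kmpFun φ K m h μ ξ x - F θ x| ≤ D x := by
    intro θ
    by_cases h : okP hmin hmax B θ
    · obtain ⟨D, hD⟩ := hcell K hK δ hδ θ.1 θ.2.1 θ.2.2 h.1 h.2
      exact ⟨D, fun _ => hD⟩
    · exact ⟨0, fun h' => absurd h' h⟩
  choose D hD using hex
  set G : Set (Th p m K) := {θ | okP hmin hmax B θ ∧ r ≤ ∫ x, (F θ x - f₀ x) ^ 2 ∂(nuX p px)}
  set key : Th p m K → (Ix p m K → Fin (N + 1)) := fun θ i =>
    ⟨min ⌊(vec θ i + (K + B)) / δ⌋₊ N, by omega⟩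
  set E : Th p m K → Set (Fin n → (Fin p → ℝ) × ℝ) := fun θ =>
    {d | (∀ i, (d i).1 ∈ cube p) ∧ ∑ i, (((d i).2 - F θ (d i).1) ^ 2 - ((d i).2 - f₀ (d i).1) ^ 2) ≤ t}
  set U : Th p m K → Set (Fin n → (Fin p → ℝ) × ℝ) := fun θ =>
    {d | ∑ i, (((d i).2 - F θ (d i).1) ^ 2 - ((d i).2 - f₀ (d i).1) ^ 2) ≤
        t + ∑ i, D θ (d i).1 * (A' + 2 * |(d i).2 - f₀ (d i).1|)}
  have hU : ∀ θ ∈ G, Measure.pi (fun _ : Fin n => trueMeas p px f₀ σ) (U θ) ≤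
      ENNReal.ofReal (exp (lam * t + n * (-(cA lam A / 2) * r + cE v lam A A' / 2 * C4 * (δ * (K : ℝ) ^ (p + 1))))) := by
    intro θ hθ
    obtain ⟨d1, d2, d3, d4⟩ := hD θ hθ.1
    refine (cell_prob px f₀ (F θ) (D θ) hpxm hf (meas_kmp φ hφ _ _ _) d1 hpx0 hpx1 σ hσ v hv lam hl
      (by rw [hv]; exact hlv) A A' hA hA' ?_ ?_ n hn t).trans ?_
    · intro x hx
      refine (abs_sub _ _).trans ?_
      have := hFb θ hθ.1 x hx
      have := hf0 x hx
      have : 0 ≤ J * B := by positivity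
      simp only [A]; linarith
    · intro x
      refine ⟨(d2 x).1, (d2 x).2.trans ?_⟩
      simp only [A]; linarith
    · refine ENNReal.ofReal_le_ofReal (exp_le_exp.2 ?_)
      have hca : 0 ≤ cA lam A / 2 := by unfold cA; positivity
      have hce : 0 ≤ cE v lam A A' / 2 := by unfold cE; positivity
      have h1 := mul_le_mul_of_nonneg_left hθ.2 hca
      have h2 := mul_le_mul_of_nonneg_left d3 hce
      gcongr _ + _ * ?_
      linarith
  have hE : ∀ θ ∈ G, ∀ θ' ∈ G, key θ = key θ' → E θ ⊆ U θ' := by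
    intro θ hθ θ' hθ' hk d hd
    obtain ⟨d1, d2, d3, d4⟩ := hD θ' hθ'.1
    have hcl : ∀ i, |vec θ i - vec θ' i| ≤ δ := fun i =>
      floor_key _ _ (K + B) δ N hδ (vec_bound hK hh1 hB θ hθ.1 i) (vec_bound hK hh1 hB θ' hθ'.1 i) hNN
        (congrArg Fin.val (congrFun hk i))
    have hcc := d4 θ.1 θ.2.1 θ.2.2 hθ.1.1 hθ.1.2 (hcl (Sum.inl ()))
      (fun k j => hcl (Sum.inr (Sum.inl (k, j))))
      (fun k s hs => by
        have := hcl (Sum.inr (Sum.inr (k, s)))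
        simpa only [vec, if_pos hs] using this)
    obtain ⟨hd1, hd2⟩ := hd
    change ∑ i, (((d i).2 - F θ' (d i).1) ^ 2 - ((d i).2 - f₀ (d i).1) ^ 2) ≤
        t + ∑ i, D θ' (d i).1 * (A' + 2 * |(d i).2 - f₀ (d i).1|)
    refine le_trans ?_ (add_le_add_left hd2 _)
    rw [← Finset.sum_add_distrib]
    refine Finset.sum_le_sum fun i _ => ?_
    have hx := hd1 i
    have e : ((d i).2 - F θ' (d i).1) ^ 2 - ((d i).2 - F θ (d i).1) ^ 2
      = (F θ (d i).1 - F θ' (d i).1) * (2 * ((d i).2 - f₀ (d i).1) - (F θ (d i).1 + F θ' (d i).1 - 2 * f₀ (d i).1)) := by ring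
    have h1 : |2 * ((d i).2 - f₀ (d i).1) - (F θ (d i).1 + F θ' (d i).1 - 2 * f₀ (d i).1)| ≤ A' + 2 * |(d i).2 - f₀ (d i).1| := by
      have a1 := hFb θ hθ.1 _ hx
      have a2 := hFb θ' hθ'.1 _ hx
      have a3 := hf0 _ hx
      have a4 := le_abs_self ((d i).2 - f₀ (d i).1)
      have a5 := neg_abs_le ((d i).2 - f₀ (d i).1)
      rw [abs_le] at a1 a2 a3 ⊢
      simp only [A']
      constructor <;> linarith
    have h2 : (F θ (d i).1 - F θ' (d i).1) * (2 * ((d i).2 - f₀ (d i).1) - (F θ (d i).1 + F θ' (d i).1 - 2 * f₀ (d i).1))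
      ≤ D θ' (d i).1 * (A' + 2 * |(d i).2 - f₀ (d i).1|) := by
      refine (le_abs_self _).trans ?_
      rw [abs_mul]
      exact mul_le_mul (hcc _ hx) h1 (abs_nonneg _) (d2 _).1
    linarith
  have hfin := union_key (Measure.pi (fun _ : Fin n => trueMeas p px f₀ σ)) G key E U _ hU hE
  refine le_trans (measure_mono ?_) (hfin.trans (le_of_eq ?_))
  · rintro d ⟨hd, f, ⟨h, hh, μ, hμ, ξ, hξ, rfl⟩, hr, ht⟩
    simp only [Set.mem_iUnion]
    refine ⟨(h, μ, ξ), ⟨⟨⟨hh, hμ⟩, hξ⟩, ?_⟩, hd, ht⟩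
    rw [integral_nuX px hpxm hpx0]
    refine hr.trans (le_of_eq ?_)
    congr 1
    funext x
    ring
  · rw [card_key, Nat.cast_pow]

end

section
lemma asym {p : ℕ} (hp : 0 < p) (α : ℝ) (hα : 0 < α) (n : ℕ) (hn : 3 ≤ n) :
    0 < Kn α p n ∧ Kn α p n ≤ n ∧
    (Kn α p n : ℝ) ^ (-α) ≤ (Real.log n / n) ^ (α / (2 * α + p)) ∧
    (Kn α p n : ℝ) ^ p * Real.log n ≤ 2 ^ p * (n * ((Real.log n / n) ^ (α / (2 * α + p))) ^ 2) ∧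
    Real.log n ≤ n * ((Real.log n / n) ^ (α / (2 * α + p))) ^ 2 := by
  have hp1 : (1 : ℝ) ≤ p := by exact_mod_cast hp
  have hn3 : (3 : ℝ) ≤ n := by exact_mod_cast hn
  have hn0 : (0 : ℝ) < n := by linarith
  set β := 2 * α + (p : ℝ) with hβ
  have hβ1 : 1 ≤ β := by linarith
  have hβ0 : 0 < β := by linarith
  have hlog : 1 ≤ Real.log n := by
    rw [Real.le_log_iff_exp_le hn0]
    have := Real.exp_one_lt_d9
    linarith
  have hl0 : 0 < Real.log n := by linarith
  have hln : Real.log n ≤ n := (Real.log_le_sub_one_of_pos hn0).trans (by linarith)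
  have hx1 : 1 ≤ (n : ℝ) / Real.log n := by rw [le_div_iff₀ hl0]; linarith
  have hx0 : 0 < (n : ℝ) / Real.log n := by linarith
  set X := (n : ℝ) / Real.log n with hX
  have hLX : Real.log n / n = X⁻¹ := by rw [hX, inv_div]
  set q := X ^ (1 / β) with hq
  have hq1 : 1 ≤ q := Real.one_le_rpow hx1 (by positivity)
  have hq0 : 0 < q := by linarith
  have hε : (Real.log n / n) ^ (α / β) = q ^ (-α) := by
    rw [hLX, Real.inv_rpow hx0.le, ← Real.rpow_neg hx0.le, hq, ← Real.rpow_mul hx0.le]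
    congr 1; ring
  have hqβ : q ^ β = X := by
    rw [hq, ← Real.rpow_mul hx0.le, one_div, inv_mul_cancel₀ hβ0.ne', Real.rpow_one]
  have hs : (n : ℝ) * (q ^ (-α)) ^ 2 = q ^ p * Real.log n := by
    have h1 : (n : ℝ) = q ^ β * Real.log n := by rw [hqβ, hX]; field_simp
    have h2 : q ^ β * (q ^ (-α)) ^ 2 = q ^ p := by
      rw [← Real.rpow_natCast (q ^ (-α)) 2, ← Real.rpow_mul hq0.le, ← Real.rpow_add hq0,
        ← Real.rpow_natCast q p]
      congr 1
      push_cast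
      rw [hβ]; ring
    calc (n : ℝ) * (q ^ (-α)) ^ 2 = (q ^ β * Real.log n) * (q ^ (-α)) ^ 2 := by rw [← h1]
      _ = (q ^ β * (q ^ (-α)) ^ 2) * Real.log n := by ring
      _ = _ := by rw [h2]
  have hK : Kn α p n = ⌈q⌉₊ := rfl
  have hqK : q ≤ (Kn α p n : ℝ) := by rw [hK]; exact Nat.le_ceil q
  have hK2 : (Kn α p n : ℝ) ≤ 2 * q := by
    rw [hK]
    have := Nat.ceil_lt_add_one hq0.le
    linarith
  rw [hε, hs]
  refine ⟨?_, ?_, ?_, ?_, ?_⟩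
  · rw [hK]; exact Nat.ceil_pos.2 hq0
  · rw [hK]
    refine Nat.ceil_le.2 ?_
    calc q ≤ X ^ (1:ℝ) := Real.rpow_le_rpow_of_exponent_le hx1 (by rw [div_le_one hβ0]; exact hβ1)
      _ = X := Real.rpow_one _
      _ ≤ n := by
        rw [hX, div_le_iff₀ hl0]; nlinarith
  · exact Real.rpow_le_rpow_of_nonpos hq0 hqK (by linarith)
  · calc _ ≤ (2 * q) ^ p * Real.log n := by gcongr
      _ = _ := by rw [mul_pow]; ring
  · have : 1 ≤ q ^ p := one_le_pow₀ hq1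
    nlinarith

lemma log_gaussD (σ : ℝ) (hσ : 0 < σ) (t : ℝ) :
    Real.log (gaussD σ t) = Real.log ((σ * Real.sqrt (2 * π))⁻¹) - t ^ 2 / (2 * σ ^ 2) := by
  unfold gaussD
  rw [Real.log_mul (by positivity) (exp_ne_zero _), Real.log_exp]
  ring

lemma argmax_ls (σ : ℝ) (hσ : 0 < σ) (n : ℕ) (a b : Fin n → ℝ)
    (h : ∑ i, Real.log (gaussD σ (a i)) ≤ ∑ i, Real.log (gaussD σ (b i))) :
    ∑ i, (b i) ^ 2 ≤ ∑ i, (a i) ^ 2 := by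
  simp only [log_gaussD σ hσ, Finset.sum_sub_distrib, ← Finset.sum_div] at h
  have h2 : (∑ i, (b i) ^ 2) / (2 * σ ^ 2) ≤ (∑ i, (a i) ^ 2) / (2 * σ ^ 2) := by linarith
  rwa [div_le_div_iff_of_pos_right (by positivity)] at h2

lemma null_cube {p : ℕ} (px f₀ : (Fin p → ℝ) → ℝ) (hpxm : Measurable px) (hf : Measurable f₀)
    (hpx0 : ∀ x ∈ cube p, 0 ≤ px x) (hpx1 : (∫ x in cube p, px x) = 1) (σ : ℝ) (hσ : 0 < σ) (n : ℕ) :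
    Measure.pi (fun _ : Fin n => trueMeas p px f₀ σ) {d | ¬ ∀ i, (d i).1 ∈ cube p} = 0 := by
  have hP := prob_true px f₀ hpxm hf hpx0 hpx1 σ hσ
  have h := ae_true px f₀ hpxm hf hpx0 σ hσ
  have h2 : ∀ᵐ d ∂(Measure.pi (fun _ : Fin n => trueMeas p px f₀ σ)), ∀ i, (d i).1 ∈ cube p := by
    rw [ae_all_iff]
    intro i
    exact (Measure.tendsto_eval_ae_ae (μ := fun _ : Fin n => trueMeas p px f₀ σ) (i := i)).eventually h
  exact ae_iff.1 h2

lemma card_bound (p m : ℕ) (B : ℝ) (hB : 0 < B) (n K : ℕ) (hn : 4 + 2 * B ≤ n) (hn3 : 3 ≤ n) (hK : 0 < K)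
    (s : ℝ) (hs : (K : ℝ) ^ p * Real.log n ≤ 2 ^ p * s) :
    ((⌈2 * ((n : ℝ) + B) * (n : ℝ) ^ (p + 2)⌉₊ + 1 : ℕ) : ℝ) ^ (1 + (K ^ p * p + K ^ p * (m + 1) ^ p))
      ≤ exp (((p : ℝ) + 4) * (1 + (p + ((m : ℝ) + 1) ^ p)) * (2 ^ p * s)) := by
  have hn0 : (3 : ℝ) ≤ n := by exact_mod_cast hn3
  have hK1 : (1 : ℝ) ≤ K := by exact_mod_cast hK
  have hlog : 0 ≤ Real.log n := Real.log_nonneg (by linarith)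
  have h1 : ((⌈2 * ((n : ℝ) + B) * (n : ℝ) ^ (p + 2)⌉₊ + 1 : ℕ) : ℝ) ≤ (n : ℝ) ^ (p + 4) := by
    push_cast
    have := (Nat.ceil_lt_add_one (show 0 ≤ 2 * ((n : ℝ) + B) * (n : ℝ) ^ (p + 2) by positivity)).le
    have h2 : (1 : ℝ) ≤ (n : ℝ) ^ (p + 2) := one_le_pow₀ (by linarith)
    calc _ ≤ 2 * ((n : ℝ) + B) * (n : ℝ) ^ (p + 2) + 2 * (n : ℝ) ^ (p + 2) := by linarith
      _ = (2 * (n : ℝ) + 2 * B + 2) * (n : ℝ) ^ (p + 2) := by ring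
      _ ≤ ((n : ℝ) * n) * (n : ℝ) ^ (p + 2) := by
          gcongr
          nlinarith
      _ = _ := by ring
  have hnexp : (n : ℝ) ^ (p + 4) = exp (((p : ℝ) + 4) * Real.log n) := by
    rw [show ((p : ℝ) + 4) = ((p + 4 : ℕ) : ℝ) by push_cast; ring, Real.exp_nat_mul,
      Real.exp_log (by linarith)]
  calc _ ≤ ((n : ℝ) ^ (p + 4)) ^ (1 + (K ^ p * p + K ^ p * (m + 1) ^ p)) := by gcongr
    _ = exp (((1 + (K ^ p * p + K ^ p * (m + 1) ^ p) : ℕ) : ℝ) * (((p : ℝ) + 4) * Real.log n)) := by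
        rw [hnexp, Real.exp_nat_mul]
    _ ≤ _ := by
        rw [exp_le_exp]
        push_cast
        have hKp : (1 : ℝ) ≤ (K : ℝ) ^ p := one_le_pow₀ hK1
        calc _ ≤ ((K : ℝ) ^ p * 1 + ((K : ℝ) ^ p * p + (K : ℝ) ^ p * ((m : ℝ) + 1) ^ p)) * (((p : ℝ) + 4) * Real.log n) := by
              gcongr; linarith
          _ = ((p : ℝ) + 4) * (1 + (p + ((m : ℝ) + 1) ^ p)) * ((K : ℝ) ^ p * Real.log n) := by ring
          _ ≤ _ := by gcongr

end

/-- Convergence rate of the sieve maximum likelihood estimator: with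
`K_n = ⌈(n/log n)^{1/(2α+p)}⌉`, the probability that some maximizer of the likelihood
over the sieve `G_{K_n}` is at `L₂(P_x)`-distance at least `M (log n/n)^{α/(2α+p)}`
from the α-Hölder truth `f₀` tends to `0`. -/
theorem statement12 {p m : ℕ} (hp : 0 < p) (α B : ℝ) (hα : 0 < α) (hB : 0 < B)
    (hm : α ≤ (m : ℝ)) (hmin hmax : ℝ) (hh1 : 1 < hmin) (hh2 : hmin < hmax)
    (σ₀ : ℝ) (hσ₀ : 0 < σ₀)
    (φ : (Fin p → ℝ) → ℝ) (hφ : IsBoxedKernel φ)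
    (hφpos : ∀ u : Fin p → ℝ, ‖u‖ < 1 → 0 < φ u)
    (f₀ : (Fin p → ℝ) → ℝ) (hf₀ : IsHolder p α B f₀)
    (px : (Fin p → ℝ) → ℝ) (hpxm : Measurable px)
    (c C : ℝ) (hc : 0 < c) (hpxb : ∀ x ∈ cube p, c ≤ px x ∧ px x ≤ C)
    (hpx1 : (∫ x in cube p, px x) = 1) :
    ∃ M : ℝ, 0 < M ∧
      Filter.Tendsto (fun n : ℕ =>
          Measure.pi (fun _ : Fin n => trueMeas p px f₀ σ₀)
            {d : Fin n → (Fin p → ℝ) × ℝ | ∃ f : (Fin p → ℝ) → ℝ,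
              memSieve φ m B hmin hmax (Kn α p n) f ∧
              (∀ g : (Fin p → ℝ) → ℝ, memSieve φ m B hmin hmax (Kn α p n) g →
                (∑ i, Real.log (gaussD σ₀ ((d i).2 - g (d i).1))) ≤
                  ∑ i, Real.log (gaussD σ₀ ((d i).2 - f (d i).1))) ∧
              M * (Real.log n / n) ^ (α / (2 * α + p)) ≤
                Real.sqrt (∫ x in cube p, (f₀ x - f x) ^ 2 * px x)})
        Filter.atTop (nhds 0) := by
  have hpx0 : ∀ x ∈ cube p, 0 ≤ px x := fun x hx => hc.le.trans (hpxb x hx).1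
  have hpxC : ∀ x ∈ cube p, px x ≤ C := fun x hx => (hpxb x hx).2
  have hf : Measurable f₀ := hf₀.1.continuous.measurable
  have hf0 : ∀ x ∈ cube p, |f₀ x| ≤ B := by
    obtain ⟨-, B₁, B₂, hB1, hB2, hBB, hb, -⟩ := hf₀
    intro x hx
    have := hb 0 (by simp [degN]) x hx
    rw [mderiv_zero] at this
    linarith
  set lam := 1 / (8 * σ₀ ^ 2) with hlam
  have hl : 0 < lam := by positivity
  have hlv : 8 * lam * σ₀ ^ 2 = 1 := by rw [hlam]; field_simp
  obtain ⟨Cst, hCst, happ⟩ := approx hp α B hα hB hm hmin hmax hh1 hh2 φ hφ hφpos f₀ hf₀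
  obtain ⟨c5, C5, hc5, hC5, hun⟩ := union_prob (m := m) hp φ hφ hh1 hh2 hφpos B hB px f₀ hpxm C hf hf0
    hpx0 hpxC hpx1 σ₀ hσ₀ lam hl hlv
  set C6 : ℝ := ((p : ℝ) + 4) * (1 + (p + ((m : ℝ) + 1) ^ p)) * 2 ^ p with hC6
  set T : ℝ := 2 * Cst ^ 2 + 1 with hT
  set M : ℝ := Real.sqrt ((C6 + lam * T + 1) / c5) with hM
  have hMpos : 0 < M := by
    rw [hM]; apply Real.sqrt_pos.2; positivity
  have hM2 : c5 * M ^ 2 = C6 + lam * T + 1 := by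
    rw [hM, Real.sq_sqrt (by positivity)]; field_simp
  refine ⟨M, hMpos, ?_⟩
  set s : ℕ → ℝ := fun n => n * ((Real.log n / n) ^ (α / (2 * α + p))) ^ 2 with hs
  have hsT : Tendsto s atTop atTop := by
    refine tendsto_atTop_mono' atTop ?_ (Real.tendsto_log_atTop.comp tendsto_natCast_atTop_atTop)
    filter_upwards [eventually_ge_atTop 3] with n hn
    exact (asym hp α hα n hn).2.2.2.2
  have hlim : Tendsto (fun n => ENNReal.ofReal (exp (-lam * s n)) + ENNReal.ofReal (exp (C5 - s n)))
      atTop (nhds 0) := by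
    have h1 : Tendsto (fun n => exp (-lam * s n)) atTop (nhds 0) := by
      refine Real.tendsto_exp_atBot.comp ?_
      exact hsT.const_mul_atTop_of_neg (by linarith)
    have h2 : Tendsto (fun n => exp (C5 - s n)) atTop (nhds 0) := by
      refine Real.tendsto_exp_atBot.comp ?_
      simp only [sub_eq_add_neg]
      exact tendsto_atBot_add_const_left _ _ (tendsto_neg_atTop_atBot.comp hsT)
    have := (ENNReal.tendsto_ofReal h1).add (ENNReal.tendsto_ofReal h2)
    simpa using this
  refine tendsto_of_tendsto_of_tendsto_of_le_of_le' tendsto_const_nhds hlim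
    (Eventually.of_forall fun _ => zero_le) ?_
  filter_upwards [eventually_ge_atTop 3, eventually_ge_atTop ⌈4 + 2 * B⌉₊] with n hn hnB
  obtain ⟨hK0, hKn, hKα, hKs, -⟩ := asym hp α hα n hn
  have hnB' : 4 + 2 * B ≤ n := Nat.ceil_le.1 hnB
  have hnpos : (0 : ℝ) < n := by have : (3 : ℝ) ≤ n := by exact_mod_cast hn
                                 linarith
  set K := Kn α p n with hKdef
  set ε := (Real.log n / n) ^ (α / (2 * α + p)) with hεdef
  have hε0 : 0 ≤ ε := by
    rw [hεdef]; apply Real.rpow_nonneg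
    exact div_nonneg (Real.log_natCast_nonneg n) hnpos.le
  have hsn : s n = n * ε ^ 2 := rfl
  have hKr : (K : ℝ) ≤ n := by exact_mod_cast hKn
  obtain ⟨fs, hfs, hfsm, hfsb⟩ := happ K hK0
  have hρ : ∀ x ∈ cube p, |fs x - f₀ x| ≤ Cst * ε := fun x hx =>
    (hfsb x hx).trans (by gcongr)
  have hv : (((σ₀ ^ 2).toNNReal : ℝ≥0) : ℝ) = σ₀ ^ 2 := Real.coe_toNNReal _ (sq_nonneg σ₀)
  have hA := approx_prob px f₀ fs hpxm hf hfsm hpx0 hpx1 σ₀ hσ₀ _ hv lam hl (by rw [hv]; exact hlv)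
    (Cst * ε) hρ n (by omega) (T * s n)
  set δ : ℝ := 1 / (n : ℝ) ^ (p + 2) with hδ
  have hδ0 : 0 < δ := by positivity
  have hNN : 2 * ((K : ℝ) + B) / δ ≤ (⌈2 * ((n : ℝ) + B) * (n : ℝ) ^ (p + 2)⌉₊ : ℕ) := by
    refine le_trans ?_ (Nat.le_ceil _)
    rw [hδ, div_div_eq_mul_div, div_one]
    gcongr
  have hU := hun K hK0 δ hδ0 _ hNN n (by omega) (T * s n) (M ^ 2 * ε ^ 2)
  have hcard := card_bound p m B hB n K hnB' hn hK0 (s n) hKs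
  have hE1 : exp (-lam * (T * s n) + 2 * lam * n * (Cst * ε) ^ 2) = exp (-lam * s n) := by
    rw [hsn, hT]; congr 1; ring
  have hE2 : ((⌈2 * ((n : ℝ) + B) * (n : ℝ) ^ (p + 2)⌉₊ + 1 : ℕ) : ℝ≥0∞) ^ (1 + (K ^ p * p + K ^ p * (m + 1) ^ p)) *
        ENNReal.ofReal (exp (lam * (T * s n) + n * (-c5 * (M ^ 2 * ε ^ 2) + C5 * (δ * (K : ℝ) ^ (p + 1)))))
      ≤ ENNReal.ofReal (exp (C5 - s n)) := by
    rw [← ENNReal.ofReal_natCast, ← ENNReal.ofReal_pow (Nat.cast_nonneg _), ← ENNReal.ofReal_mul (by positivity)]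
    refine ENNReal.ofReal_le_ofReal ((mul_le_mul_of_nonneg_right hcard (exp_nonneg _)).trans ?_)
    rw [← exp_add, exp_le_exp]
    have h1 : (n : ℝ) * (C5 * (δ * (K : ℝ) ^ (p + 1))) ≤ C5 := by
      calc (n : ℝ) * (C5 * (δ * (K : ℝ) ^ (p + 1))) ≤ (n : ℝ) * (C5 * (δ * (n : ℝ) ^ (p + 1))) := by gcongr
        _ = C5 := by rw [hδ]; field_simp; ring
    have h2 : (n : ℝ) * (-c5 * (M ^ 2 * ε ^ 2)) = -(C6 + lam * T + 1) * s n := by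
      rw [← hM2, hsn]; ring
    have h3 : ((p : ℝ) + 4) * (1 + (p + ((m : ℝ) + 1) ^ p)) * (2 ^ p * s n) = C6 * s n := by
      rw [hC6]; ring
    rw [h3, mul_add (n : ℝ), h2]
    linarith
  have hnull := null_cube px f₀ hpxm hf hpx0 hpx1 σ₀ hσ₀ n
  rw [hE1] at hA
  have hU2 := hU.trans hE2
  refine le_trans (measure_mono ?_) ((measure_union_le _ _).trans
    (add_le_add hA ((measure_union_le _ _).trans ((add_le_add hU2 hnull.le).trans (le_of_eq (add_zero _))))))
  rintro d ⟨f, hfm, hmax', hfd⟩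
  by_cases hcube : ∀ i, (d i).1 ∈ cube p
  swap
  · exact Or.inr (Or.inr hcube)
  by_cases hbig : T * s n ≤ ∑ i, (((d i).2 - fs (d i).1) ^ 2 - ((d i).2 - f₀ (d i).1) ^ 2)
  · exact Or.inl hbig
  refine Or.inr (Or.inl ⟨hcube, f, hfm, ?_, ?_⟩)
  · have h1 : 0 ≤ M * ε := by positivity
    have h2 : 0 ≤ ∫ x in cube p, (f₀ x - f x) ^ 2 * px x :=
      setIntegral_nonneg (meas_cube p) fun x hx => mul_nonneg (sq_nonneg _) (hpx0 x hx)
    have h3 := (Real.le_sqrt h1 h2).1 hfd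
    rw [← mul_pow]
    exact h3
  · have h1 := argmax_ls σ₀ hσ₀ n _ _ (hmax' fs hfs)
    rw [Finset.sum_sub_distrib] at hbig ⊢
    push Not at hbig
    linarith


end KMP
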